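/- arXiv:2109.10331 — 2 statements merged into one kernel-verified Lean document; each statement's English description precedes it below -/
import Mathlib

section
/- Fix an integer κ ≥ 1. For each M ≥ 1 set N = M + κ and let A be the top-left M×M truncation of a Haar orthogonal matrix from O(N). Then, as M → ∞, the law of log|det(A)| + (κ/2)·log(M/2) (the pushforward of the Haar probability measure under this map) converges weakly to the law of (1/2)·∑_{j=0}^{κ−1} log Γ_j, where Γ_0, …, Γ_{κ−1} are independent and Γ_j has the Gamma distribution with shape parameter (1+j)/2 and rate 1; i.e. the limit law is the pushforward of the product measure ⊗_{j=0}^{κ−1} Gamma((1+j)/2, 1) on (0,∞)^κ under the map t ↦ (1/2)·∑_{j=0}^{κ−1} log t_j. -/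
open MeasureTheory Matrix Filter ProbabilityTheory

noncomputable section

/-- Borel measurable structure on the orthogonal group. -/
instance (N : ℕ) : MeasurableSpace (Matrix.orthogonalGroup (Fin N) ℝ) := borel _

/-- The top-left `M × M` truncation of an `N × N` orthogonal matrix. -/
def truncO (N M : ℕ) (h : M ≤ N) (U : Matrix.orthogonalGroup (Fin N) ℝ) :
    Matrix (Fin M) (Fin M) ℝ :=
  Matrix.submatrix (U : Matrix (Fin N) (Fin N) ℝ) (Fin.castLE h) (Fin.castLE h)

/-!
Complementary minors of an orthogonal matrix have the same absolute value, so `|det A|` is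
`|det D|` for the lower right `κ × κ` block `D`. If `W` is a `κ × N` matrix of independent standard
Gaussian variables, then `W` times a Haar orthogonal matrix is on the one hand distributed as `W`,
and on the other hand, given `W`, its row space is that of the last `κ` rows of a Haar orthogonal
matrix. Comparing the squared Plücker coordinates of the last `κ` columns shows that `(det D)²` has
the law of `(det X)² / det (W Wᵀ)`, where `X` consists of the last `κ` columns of `W`.

All these `W` can be read off one infinite sequence of independent Gaussian columns with `X` fixed.
By the strong law of large numbers `det (W Wᵀ) / N ^ κ → 1` almost surely, so
`log |det A| + (κ / 2) log (M / 2)` is distributed as a sequence converging almost surely to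
`(1 / 2) log ((det X)² / 2 ^ κ)`. Rotating the first row of `X` onto a coordinate axis splits off
the independent factor `|r|² / 2`, a Gamma variable, and induction gives
`(det X)² / 2 ^ κ ∼ ∏ Γ_j`.
-/

open Module Set Topology
open scoped RealInnerProductSpace

section ProductMeasures

variable {α β β' γ : Type*} [MeasurableSpace α] [MeasurableSpace β] [MeasurableSpace β']
  [MeasurableSpace γ]

lemma map_uncurry_prod_congr {μ : Measure α} {ν : Measure β} {ν' : Measure β'}
    [SFinite ν] [SFinite ν'] {F : α → β → γ} {G : α → β' → γ}
    (hF : Measurable (Function.uncurry F)) (hG : Measurable (Function.uncurry G))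
    (h : ∀ᵐ a ∂μ, ν.map (F a) = ν'.map (G a)) :
    (μ.prod ν).map (Function.uncurry F) = (μ.prod ν').map (Function.uncurry G) := by
  refine Measure.ext_of_lintegral _ fun g hg ↦ ?_
  rw [lintegral_map hg hF, lintegral_map hg hG, lintegral_prod _ (by fun_prop),
    lintegral_prod _ (by fun_prop)]
  refine lintegral_congr_ae (h.mono fun a ha ↦ ?_)
  simp only [Function.uncurry_apply_pair]
  rw [← lintegral_map hg hF.of_uncurry_left, ha, lintegral_map hg hG.of_uncurry_left]

lemma map_uncurry_prod_eq_of_ae_map_eq {μ : Measure α} {ν : Measure β} {ρ : Measure γ}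
    [IsProbabilityMeasure μ] [SFinite ν] [SFinite ρ] {F : α → β → γ}
    (hF : Measurable (Function.uncurry F)) (h : ∀ᵐ a ∂μ, ν.map (F a) = ρ) :
    (μ.prod ν).map (Function.uncurry F) = ρ := by
  rw [map_uncurry_prod_congr (G := fun _ y ↦ y) (ν' := ρ) hF measurable_snd (by simpa using h)]
  exact Measure.snd_prod

lemma eq_of_ae_map_eq {μ : Measure α} {ν : Measure β} {ρ σ : Measure γ} [IsProbabilityMeasure μ]
    [IsProbabilityMeasure ν] [SFinite ρ] [SFinite σ] {F : α → β → γ}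
    (hF : Measurable (Function.uncurry F)) (hρ : ∀ᵐ a ∂μ, ν.map (F a) = ρ)
    (hσ : ∀ᵐ b ∂ν, μ.map (F · b) = σ) : ρ = σ := by
  rw [← map_uncurry_prod_eq_of_ae_map_eq hF hρ, ← Measure.prod_swap,
    Measure.map_map hF measurable_swap]
  exact map_uncurry_prod_eq_of_ae_map_eq (F := fun b a ↦ F a b) (hF.comp measurable_swap) hσ

lemma ae_tendsto_average_infinitePi {ν : Measure α} [IsProbabilityMeasure ν] {f : α → ℝ}
    (hf : Measurable f) (hint : Integrable f ν) :
    ∀ᵐ ω ∂Measure.infinitePi fun _ : ℕ ↦ ν,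
      Tendsto (fun n : ℕ ↦ (∑ m ∈ Finset.range n, f (ω m)) / n) atTop (𝓝 (∫ x, f x ∂ν)) := by
  have heval (n : ℕ) := measurePreserving_eval_infinitePi (fun _ : ℕ ↦ ν) n
  have hindep : iIndepFun (fun n (ω : ℕ → α) ↦ f (ω n)) (Measure.infinitePi fun _ : ℕ ↦ ν) :=
    iIndepFun_infinitePi (X := fun _ ↦ f) fun _ ↦ hf
  have hident (n : ℕ) : IdentDistrib (fun ω : ℕ → α ↦ f (ω n)) (fun ω ↦ f (ω 0))
      (Measure.infinitePi fun _ ↦ ν) (Measure.infinitePi fun _ ↦ ν) :=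
    IdentDistrib.comp ⟨(heval n).aemeasurable, (heval 0).aemeasurable,
      (heval n).map_eq.trans (heval 0).map_eq.symm⟩ hf
  have hmean : ∫ ω, f (ω 0) ∂Measure.infinitePi (fun _ : ℕ ↦ ν) = ∫ x, f x ∂ν := by
    have h := integral_map (heval 0).aemeasurable (f := f) hf.aestronglyMeasurable
    rwa [(heval 0).map_eq, eq_comm] at h
  rw [← hmean]
  have hint₀ : Integrable (fun ω : ℕ → α ↦ f (ω 0)) (Measure.infinitePi fun _ : ℕ ↦ ν) :=
    (heval 0).integrable_comp_of_integrable hint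
  exact strong_law_ae_real _ hint₀ (fun _ _ hne ↦ hindep.indepFun hne) hident

end ProductMeasures

section OrthogonalMatrices

variable {k m n : Type*} [Fintype n]

lemma det_mul_det_toBlocks₂₂_of_mul_transpose_eq_one {R : Type*} [CommRing R]
    [Fintype m] [DecidableEq m] [DecidableEq n]
    {U : Matrix (m ⊕ n) (m ⊕ n) R} (hU : U * Uᵀ = 1) :
    U.det * U.toBlocks₂₂.det = U.toBlocks₁₁.det := by
  obtain ⟨A, B, C, D, rfl⟩ : ∃ A B C D, U = fromBlocks A B C D :=
    ⟨_, _, _, _, (fromBlocks_toBlocks U).symm⟩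
  rw [fromBlocks_transpose, fromBlocks_multiply, ← fromBlocks_one, fromBlocks_inj] at hU
  obtain ⟨-, hAC, -, hCD⟩ := hU
  have hmul : fromBlocks A B C D * fromBlocks 1 Cᵀ 0 Dᵀ = fromBlocks A 0 C 1 := by
    simp [fromBlocks_multiply, hAC, hCD]
  simpa using congrArg det hmul

lemma sq_det_orthogonalGroup {R : Type*} [CommRing R] [DecidableEq n] (U : orthogonalGroup n R) :
    U.1.det ^ 2 = 1 := by
  have h := congrArg det ((mem_orthogonalGroup_iff n R).mp U.2)
  rwa [det_mul, det_transpose, det_one, ← sq] at h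

lemma orthonormal_toLp_rows_iff [DecidableEq k] {Q : Matrix k n ℝ} :
    Orthonormal ℝ (fun i ↦ (WithLp.toLp 2 (Q i) : EuclideanSpace ℝ n)) ↔ Q * Qᵀ = 1 := by
  simp only [orthonormal_iff_ite, ← Matrix.ext_iff, mul_apply, one_apply, transpose_apply,
    PiLp.inner_apply, RCLike.inner_apply, conj_trivial, mul_comm]

variable [Fintype k]

lemma exists_orthonormalBasis_forall_mem_inner_eq_zero {𝕜 E : Type*} [RCLike 𝕜]
    [NormedAddCommGroup E] [InnerProductSpace 𝕜 E] [FiniteDimensional 𝕜 E]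
    (S : Submodule 𝕜 E) (e : k ↪ n) (hk : finrank 𝕜 S ≤ Fintype.card k)
    (hn : finrank 𝕜 E = Fintype.card n) :
    ∃ b : OrthonormalBasis n 𝕜 E, ∀ x ∈ S, ∀ j ∉ range e, inner 𝕜 (b j) x = 0 := by
  let u := stdOrthonormalBasis 𝕜 S
  obtain ⟨ι⟩ : Nonempty (Fin (finrank 𝕜 S) ↪ k) := by
    simpa using Function.Embedding.nonempty_of_card_le (by simpa using hk)
  let g := ι.trans e
  let v : n → E := Function.extend g (fun a ↦ (u a : E)) 0
  have hv (a) : v (g a) = u a := g.injective.extend_apply _ _ a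
  have hortho : Orthonormal 𝕜 ((range g).domRestrict v) := by
    let σ := (Equiv.ofInjective g g.injective).symm
    have hvσ : (range g).domRestrict v = (S.subtypeₗᵢ ∘ u) ∘ σ := by
      ext ⟨_, a, rfl⟩
      simp [σ, hv]
    exact hvσ ▸ (u.orthonormal.comp_linearIsometry S.subtypeₗᵢ).comp σ σ.injective
  obtain ⟨b, hb⟩ := hortho.exists_orthonormalBasis_extension_of_card_eq hn
  refine ⟨b, fun x hx j hj ↦ ?_⟩
  have hju (a) : inner 𝕜 (b j) (u a : E) = 0 := by
    rw [← hv, ← hb _ (mem_range_self a)]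
    exact b.orthonormal.2 fun h ↦ hj ⟨ι a, h.symm⟩
  lift x to S using hx
  rw [← u.sum_repr x]
  simp [inner_sum, inner_smul_right, hju]

lemma exists_eq_mul_submatrix_orthogonalGroup [DecidableEq n] (W : Matrix k n ℝ) (e : k ↪ n) :
    ∃ (L : Matrix k k ℝ) (V : orthogonalGroup n ℝ), W = L * V.1.submatrix e id := by
  let w (i : k) : EuclideanSpace ℝ n := WithLp.toLp 2 (W i)
  obtain ⟨b, hb⟩ := exists_orthonormalBasis_forall_mem_inner_eq_zero
    (Submodule.span ℝ (range w)) e (finrank_range_le_card w) (by simp)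
  let V : Matrix n n ℝ := of fun j ↦ (b j).ofLp
  have hV : V ∈ orthogonalGroup n ℝ :=
    (mem_orthogonalGroup_iff n ℝ).mpr (orthonormal_toLp_rows_iff.mp b.orthonormal)
  refine ⟨of fun i j ↦ ⟪b (e j), w i⟫, ⟨V, hV⟩, ?_⟩
  ext i l
  have hexp : ∑ j, ⟪b j, w i⟫ * b j l = W i l := by
    simpa [w] using congrArg (fun x : EuclideanSpace ℝ n ↦ x l) (b.sum_repr' (w i))
  have hzero (j : n) (hj : j ∉ range e) : ⟪b j, w i⟫ * b j l = 0 := by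
    rw [hb _ (Submodule.subset_span (mem_range_self i)) j hj, zero_mul]
  rw [← hexp, mul_apply]
  exact (Fintype.sum_of_injective e e.injective _ _ hzero fun _ ↦ rfl).symm

lemma mul_transpose_eq_mul_transpose_of_eq_mul_submatrix [DecidableEq n] {W : Matrix k n ℝ}
    {L : Matrix k k ℝ} {V : orthogonalGroup n ℝ} {e : k ↪ n} (h : W = L * V.1.submatrix e id) :
    W * Wᵀ = L * Lᵀ := by
  classical
  have hV : V.1.submatrix e id * (V.1.submatrix e id)ᵀ = 1 := by
    rw [transpose_submatrix, ← submatrix_mul _ _ e id e Function.bijective_id,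
      (mem_orthogonalGroup_iff n ℝ).mp V.2, submatrix_one_embedding]
  rw [h, transpose_mul, Matrix.mul_assoc, ← Matrix.mul_assoc _ _ Lᵀ, hV, Matrix.one_mul]

lemma det_mul_transpose_ne_zero_of_det_submatrix_ne_zero [DecidableEq k]
    {W : Matrix k n ℝ} {c : k → n} (h : (W.submatrix id c).det ≠ 0) : (W * Wᵀ).det ≠ 0 := by
  contrapose! h
  obtain ⟨v, hv, hvW⟩ := exists_vecMul_eq_zero_iff.mpr h
  have hvW : v ᵥ* W = 0 := by
    rwa [← conjTranspose_eq_transpose_of_trivial, vecMul_self_mul_conjTranspose_eq_zero] at hvW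
  refine exists_vecMul_eq_zero_iff.mp ⟨v, hv, funext fun j ↦ congrFun hvW (c j)⟩

/-- The square of the Plücker coordinate, at the columns `c`, of the row space of `W`: the squared
minor divided by the Gram determinant, so that it depends only on the row space. It is `0` by
convention when the rows of `W` are linearly dependent. -/
def sqPluckerCoord [DecidableEq k] (W : Matrix k n ℝ) (c : k → n) : ℝ :=
  (W.submatrix id c).det ^ 2 / (W * Wᵀ).det

lemma sqPluckerCoord_mul_orthogonalGroup [DecidableEq k] [DecidableEq n]
    {W : Matrix k n ℝ} {L : Matrix k k ℝ} {V : orthogonalGroup n ℝ} {e : k ↪ n}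
    (hW : W = L * V.1.submatrix e id) (hdet : (W * Wᵀ).det ≠ 0) (U : orthogonalGroup n ℝ)
    (c : k → n) :
    sqPluckerCoord (W * U.1) c = ((V * U).1.submatrix e c).det ^ 2 := by
  have hWU : W * U.1 = L * (V * U).1.submatrix e id := by
    rw [hW, Matrix.mul_assoc]
    rfl
  have hgram := mul_transpose_eq_mul_transpose_of_eq_mul_submatrix hW
  have hL : L.det ^ 2 = (W * Wᵀ).det := by rw [hgram, det_mul, det_transpose, sq]
  have hminor : (W * U.1).submatrix id c = L * (V * U).1.submatrix e c := by
    rw [hWU]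
    rfl
  rw [sqPluckerCoord, mul_transpose_eq_mul_transpose_of_eq_mul_submatrix hWU, ← hgram, hminor,
    det_mul, mul_pow, hL, mul_div_cancel_left₀ _ hdet]

end OrthogonalMatrices

section GaussianArrays

variable {m n m' n' : Type*}

/-- The law of a family, indexed by `n`, of independent standard Gaussian variables; `n` may be
infinite. -/
def gaussianVector (n : Type*) : Measure (n → ℝ) :=
  Measure.infinitePi fun _ ↦ gaussianReal 0 1

instance : IsProbabilityMeasure (gaussianVector n) := by
  unfold gaussianVector
  infer_instance

/-- The law of an `m × n` array of independent standard Gaussian variables. It lives on functions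
since `Matrix` carries no measurable structure, and both index types may be infinite. -/
def gaussianMatrix (m n : Type*) : Measure (m → n → ℝ) :=
  Measure.infinitePi fun _ ↦ gaussianVector n

instance : IsProbabilityMeasure (gaussianMatrix m n) := by
  unfold gaussianMatrix
  infer_instance

lemma gaussianVector_eq_pi [Fintype n] :
    gaussianVector n = Measure.pi fun _ ↦ gaussianReal 0 1 :=
  Measure.infinitePi_eq_pi _

lemma gaussianMatrix_eq_pi [Fintype m] :
    gaussianMatrix m n = Measure.pi fun _ ↦ gaussianVector n :=
  Measure.infinitePi_eq_pi _

lemma measurePreserving_gaussianMatrix_rows {f : (n → ℝ) → n' → ℝ}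
    (hf : MeasurePreserving f (gaussianVector n) (gaussianVector n')) :
    MeasurePreserving (fun (W : m → n → ℝ) i ↦ f (W i)) (gaussianMatrix m n)
      (gaussianMatrix m n') := by
  have hfm := hf.measurable
  refine ⟨by fun_prop, ?_⟩
  rw [gaussianMatrix, Measure.infinitePi_map_pi _ fun _ ↦ hfm, hf.map_eq, gaussianMatrix]

lemma measurePreserving_gaussianVector_comp {f : n' → n} (hf : f.Injective) :
    MeasurePreserving (fun (x : n → ℝ) j ↦ x (f j)) (gaussianVector n) (gaussianVector n') :=
  ⟨by fun_prop, Measure.map_infinitePi_infinitePi_of_inj hf⟩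

lemma measurePreserving_gaussianMatrix_submatrix {f : m' → m} {g : n' → n} (hf : f.Injective)
    (hg : g.Injective) :
    MeasurePreserving (fun (W : m → n → ℝ) i j ↦ W (f i) (g j)) (gaussianMatrix m n)
      (gaussianMatrix m' n') :=
  (measurePreserving_gaussianMatrix_rows (measurePreserving_gaussianVector_comp hg)).comp
    ⟨by fun_prop, Measure.map_infinitePi_infinitePi_of_inj hf⟩

lemma measurePreserving_curry_gaussianVector :
    MeasurePreserving Function.curry (gaussianVector (m × n)) (gaussianMatrix m n) :=
  ⟨measurable_curry, Measure.infinitePi_map_curry fun _ _ ↦ gaussianReal 0 1⟩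

lemma measurePreserving_uncurry_gaussianMatrix :
    MeasurePreserving Function.uncurry (gaussianMatrix m n) (gaussianVector (m × n)) :=
  ⟨measurable_uncurry, Measure.infinitePi_map_curry_symm fun _ _ ↦ gaussianReal 0 1⟩

lemma measurePreserving_gaussianMatrix_transpose :
    MeasurePreserving (fun (W : m → n → ℝ) j i ↦ W i j) (gaussianMatrix m n)
      (gaussianMatrix n m) :=
  measurePreserving_curry_gaussianVector.comp <|
    (measurePreserving_gaussianVector_comp Prod.swap_injective).comp
      measurePreserving_uncurry_gaussianMatrix

lemma measurePreserving_gaussianVector_vecMul [Fintype n] [DecidableEq n]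
    (V : orthogonalGroup n ℝ) :
    MeasurePreserving (fun x : n → ℝ ↦ x ᵥ* V.1) (gaussianVector n) (gaussianVector n) := by
  refine ⟨by fun_prop, (MeasurableEquiv.toLp 2 (n → ℝ)).map_measurableEquiv_injective ?_⟩
  have hrows := orthonormal_toLp_rows_iff.mpr ((mem_orthogonalGroup_iff n ℝ).mp V.2)
  let b := OrthonormalBasis.mk hrows
    (hrows.linearIndependent.span_eq_top_of_card_eq_finrank' (by simp)).ge
  have hb : WithLp.toLp 2 ∘ (fun x : n → ℝ ↦ x ᵥ* V.1) = fun x ↦ ∑ i, x i • b i := by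
    ext x j
    simp [b, vecMul, dotProduct]
  simp only [MeasurableEquiv.coe_toLp]
  rw [Measure.map_map (by fun_prop) (by fun_prop), hb, gaussianVector_eq_pi,
    ← stdGaussian_eq_map_pi_orthonormalBasis b, map_pi_eq_stdGaussian]

lemma measurePreserving_gaussianMatrix_mul [Fintype n] [DecidableEq n] (V : orthogonalGroup n ℝ) :
    MeasurePreserving (fun (W : m → n → ℝ) i ↦ W i ᵥ* V.1) (gaussianMatrix m n)
      (gaussianMatrix m n) :=
  measurePreserving_gaussianMatrix_rows (measurePreserving_gaussianVector_vecMul V)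

lemma measurePreserving_gaussianVector_eval (i : n) :
    MeasurePreserving (fun x : n → ℝ ↦ x i) (gaussianVector n) (gaussianReal 0 1) :=
  measurePreserving_eval_infinitePi _ i

lemma memLp_eval_gaussianVector (i : n) : MemLp (fun x : n → ℝ ↦ x i) 2 (gaussianVector n) :=
  (memLp_id_gaussianReal 2).comp_measurePreserving (measurePreserving_gaussianVector_eval i)

lemma integral_eval_gaussianVector (f : ℝ → ℝ) (hf : Measurable f) (i : n) :
    ∫ x, f (x i) ∂gaussianVector n = ∫ y, f y ∂gaussianReal 0 1 := by
  have heval := measurePreserving_gaussianVector_eval i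
  rw [← heval.map_eq, integral_map heval.aemeasurable hf.aestronglyMeasurable]

lemma integral_eval_mul_eval_gaussianVector [DecidableEq n] (i j : n) :
    ∫ x, x i * x j ∂gaussianVector n = (1 : Matrix n n ℝ) i j := by
  obtain rfl | hij := eq_or_ne i j
  · have hvar := variance_id_gaussianReal (μ := 0) (v := 1)
    rw [variance_eq_integral (by fun_prop)] at hvar
    rw [one_apply_eq, integral_eval_gaussianVector (fun y ↦ y * y) (by fun_prop)]
    simpa [sq] using hvar
  · have hindep : iIndepFun (fun i (x : n → ℝ) ↦ x i) (gaussianVector n) :=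
      iIndepFun_infinitePi (X := fun _ x ↦ x) (by fun_prop)
    have hmean : ∫ x, x i ∂gaussianVector n = 0 :=
      (integral_eval_gaussianVector (fun y ↦ y) measurable_id i).trans integral_id_gaussianReal
    rw [one_apply_ne hij, (hindep.indepFun hij).integral_fun_mul_eq_mul_integral
      (memLp_eval_gaussianVector i).1 (memLp_eval_gaussianVector j).1, hmean, zero_mul]

lemma ae_tendsto_average_gaussianMatrix [Countable n] [DecidableEq n] :
    ∀ᵐ ω ∂gaussianMatrix ℕ n, ∀ i j,
      Tendsto (fun N : ℕ ↦ (∑ l ∈ Finset.range N, ω l i * ω l j) / (N : ℝ)) atTop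
        (𝓝 ((1 : Matrix n n ℝ) i j)) := by
  refine ae_all_iff.mpr fun i ↦ ae_all_iff.mpr fun j ↦ ?_
  rw [← integral_eval_mul_eval_gaussianVector]
  exact ae_tendsto_average_infinitePi (f := fun x : n → ℝ ↦ x i * x j) (by fun_prop)
    ((memLp_eval_gaussianVector i).integrable_mul (memLp_eval_gaussianVector j))

end GaussianArrays

section ChiSquare

variable {Ω Ω' : Type*} {mΩ : MeasurableSpace Ω} {mΩ' : MeasurableSpace Ω'}

lemma map_eq_map_of_mgf_eq {μ : Measure Ω} {ν : Measure Ω'} [IsProbabilityMeasure μ]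
    [IsProbabilityMeasure ν] {X : Ω → ℝ} {Y : Ω' → ℝ} (hX : AEMeasurable X μ)
    (hY : AEMeasurable Y ν) (h : mgf X μ = mgf Y ν) (h₀ : 0 ∈ interior (integrableExpSet X μ)) :
    μ.map X = ν.map Y := by
  have := Measure.isProbabilityMeasure_map hX
  have := Measure.isProbabilityMeasure_map hY
  refine Measure.ext_of_charFun (funext fun t ↦ ?_)
  rw [← complexMGF_mul_I hX, ← complexMGF_mul_I hY]
  exact eqOn_complexMGF_of_mgf h (by simpa using h₀)

-- For `1 ≤ t` the integral diverges, and both sides are `0` by convention.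
lemma mgf_sq_half_gaussianReal (t : ℝ) :
    mgf (fun x ↦ x ^ 2 / 2) (gaussianReal 0 1) t = √(1 / (1 - t)) := by
  have hdensity (x : ℝ) : gaussianPDFReal 0 1 x • Real.exp (t * (x ^ 2 / 2)) =
      (√(2 * Real.pi))⁻¹ * Real.exp (-((1 - t) / 2) * x ^ 2) := by
    rw [gaussianPDFReal, smul_eq_mul, mul_assoc, ← Real.exp_add]
    congr 2
    · simp
    · simp only [sub_zero, NNReal.coe_one]
      ring
  have hsqrt : √(Real.pi / ((1 - t) / 2)) = √(2 * Real.pi) * √(1 / (1 - t)) := by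
    rw [← Real.sqrt_mul (by positivity)]
    congr 1
    rw [div_div_eq_mul_div]
    ring
  rw [mgf, integral_gaussianReal_eq_integral_smul one_ne_zero]
  simp only [hdensity]
  rw [integral_const_mul, integral_gaussian, hsqrt, inv_mul_cancel_left₀ (by positivity)]

lemma mgf_dotProduct_self_half_gaussianVector {n : Type*} [Fintype n] (t : ℝ) :
    mgf (fun x : n → ℝ ↦ x ⬝ᵥ x / 2) (gaussianVector n) t =
      √(1 / (1 - t)) ^ Fintype.card n := by
  have hprod (x : n → ℝ) :
      Real.exp (t * (x ⬝ᵥ x / 2)) = ∏ i, Real.exp (t * (x i ^ 2 / 2)) := by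
    simp only [← Real.exp_sum, ← Finset.mul_sum, ← Finset.sum_div, dotProduct, sq]
  rw [mgf, gaussianVector_eq_pi]
  simp only [hprod]
  rw [integral_fintype_prod_eq_prod fun (_ : n) (x : ℝ) ↦ Real.exp (t * (x ^ 2 / 2))]
  simp only [← mgf_sq_half_gaussianReal, mgf, Finset.prod_const, Finset.card_univ]

lemma zero_mem_interior_integrableExpSet_dotProduct_self_half {n : Type*} [Fintype n] :
    0 ∈ interior (integrableExpSet (fun x : n → ℝ ↦ x ⬝ᵥ x / 2) (gaussianVector n)) := by
  refine mem_interior.mpr ⟨Iio 1, fun t (ht : t < 1) ↦ ?_, isOpen_Iio, by simp⟩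
  by_contra hnot
  have hzero := (mgf_dotProduct_self_half_gaussianVector t).symm.trans (integral_undef hnot)
  have hpos : 0 < 1 / (1 - t) := by simpa using ht
  exact (pow_pos (Real.sqrt_pos.mpr hpos) _).ne' hzero

lemma measurable_gammaPDF (a r : ℝ) : Measurable (gammaPDF a r) :=
  (measurable_gammaPDFReal a r).ennreal_ofReal

lemma integral_gammaMeasure {a r : ℝ} (ha : 0 < a) (hr : 0 < r) (g : ℝ → ℝ) :
    ∫ x, g x ∂gammaMeasure a r =
      ∫ x in Ioi 0, r ^ a / Real.Gamma a * (x ^ (a - 1) * Real.exp (-(r * x)) * g x) := by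
  rw [gammaMeasure, integral_withDensity_eq_integral_toReal_smul (measurable_gammaPDF a r)
    (by simp [gammaPDF]), ← integral_Ici_eq_integral_Ioi, ← integral_indicator measurableSet_Ici]
  congr with x
  by_cases hx : x ∈ Ici 0
  · rw [gammaPDF, ENNReal.toReal_ofReal (gammaPDFReal_nonneg ha hr x), indicator_of_mem hx]
    simp only [gammaPDFReal, mem_Ici.mp hx, if_true, smul_eq_mul]
    ring
  · rw [gammaPDF_of_neg (notMem_Ici.mp hx), indicator_of_notMem hx]
    simp

lemma not_integrableOn_rpow_mul_exp_mul_Ioi {a s : ℝ} (hs : 0 ≤ s) :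
    ¬IntegrableOn (fun x : ℝ ↦ x ^ a * Real.exp (s * x)) (Ioi 0) := by
  refine fun hint ↦ not_integrableOn_Ioi_rpow a (hint.mono' (by fun_prop) ?_)
  filter_upwards [ae_restrict_mem measurableSet_Ioi] with x hx
  have hx : 0 < x := hx
  have hxa : 0 ≤ x ^ a := by positivity
  rw [Real.norm_of_nonneg hxa]
  exact le_mul_of_one_le_right hxa (Real.one_le_exp (by positivity))

-- The value for `r ≤ t` is the convention for divergent integrals.
lemma mgf_gammaMeasure {a r : ℝ} (ha : 0 < a) (hr : 0 < r) (t : ℝ) :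
    mgf id (gammaMeasure a r) t = if t < r then (r / (r - t)) ^ a else 0 := by
  have hexp (x : ℝ) : x ^ (a - 1) * Real.exp (-(r * x)) * Real.exp (t * id x) =
      x ^ (a - 1) * Real.exp (-((r - t) * x)) := by
    rw [mul_assoc, ← Real.exp_add, id]
    ring_nf
  rw [mgf, integral_gammaMeasure ha hr, integral_const_mul]
  simp only [hexp]
  split_ifs with ht
  · rw [Real.integral_rpow_mul_exp_neg_mul_Ioi ha (sub_pos.mpr ht),
      Real.div_rpow hr.le (sub_pos.mpr ht).le, Real.div_rpow zero_le_one (sub_pos.mpr ht).le,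
      Real.one_rpow]
    have := Real.Gamma_pos_of_pos ha
    field_simp
  · rw [integral_undef, mul_zero]
    simpa only [IntegrableOn, ← neg_mul, neg_sub] using
      not_integrableOn_rpow_mul_exp_mul_Ioi (a := a - 1) (sub_nonneg.mpr (not_lt.mp ht))

lemma map_dotProduct_self_half_gaussianVector {n : Type*} [Fintype n] [Nonempty n] :
    (gaussianVector n).map (fun x ↦ x ⬝ᵥ x / 2) = gammaMeasure (Fintype.card n / 2) 1 := by
  have hshape : 0 < (Fintype.card n : ℝ) / 2 := by
    have := Fintype.card_pos (α := n)
    positivity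
  have := isProbabilityMeasure_gammaMeasure hshape one_pos
  rw [← Measure.map_id (μ := gammaMeasure _ 1)]
  refine map_eq_map_of_mgf_eq (by fun_prop) aemeasurable_id (funext fun t ↦ ?_)
    zero_mem_interior_integrableExpSet_dotProduct_self_half
  rw [mgf_dotProduct_self_half_gaussianVector, mgf_gammaMeasure hshape one_pos]
  split_ifs with ht
  · have hpos : 0 < 1 / (1 - t) := by simpa using ht
    rw [Real.sqrt_eq_rpow, ← Real.rpow_mul_natCast hpos.le, one_div_mul_eq_div]
  · have hnonpos : 1 / (1 - t) ≤ 0 := by simpa using ht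
    rw [Real.sqrt_eq_zero_of_nonpos hnonpos, zero_pow Fintype.card_ne_zero]

lemma ae_pos_gammaMeasure (a r : ℝ) : ∀ᵐ x ∂gammaMeasure a r, 0 < x := by
  rw [gammaMeasure, ae_withDensity_iff (measurable_gammaPDF a r)]
  filter_upwards [compl_mem_ae_iff.mpr (measure_singleton (0 : ℝ))] with x hx₀ hpdf
  by_contra hx
  exact hpdf (gammaPDF_of_neg (lt_of_le_of_ne (not_lt.mp hx) hx₀))

end ChiSquare

section GaussianDeterminant

lemma measurable_det_of {n : Type*} [Fintype n] [DecidableEq n] :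
    Measurable fun X : n → n → ℝ ↦ (of X).det := by
  have hcont : Continuous fun X : n → n → ℝ ↦ (of X).det := Continuous.matrix_det continuous_id
  exact hcont.measurable

lemma exists_vecMul_orthogonalGroup_eq_single {n : Type*} [Fintype n] [DecidableEq n] (r : n → ℝ)
    (i : n) : ∃ (c : ℝ) (V : orthogonalGroup n ℝ), c ^ 2 = r ⬝ᵥ r ∧ r ᵥ* V.1 = Pi.single i c := by
  let e : Unit ↪ n := ⟨fun _ ↦ i, Function.injective_of_subsingleton _⟩
  obtain ⟨L, V, hLV⟩ := exists_eq_mul_submatrix_orthogonalGroup (replicateRow Unit r) e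
  refine ⟨L () (), V⁻¹, ?_, ?_⟩
  · simpa [replicateRow, mul_apply, dotProduct, sq] using
      congrFun₂ (mul_transpose_eq_mul_transpose_of_eq_mul_submatrix hLV).symm () ()
  · have hr : r = Pi.single i (L () ()) ᵥ* V.1 := by
      ext j
      simpa [mul_apply, e] using congrFun₂ hLV () j
    have hVV : V.1 * (V⁻¹).1 = 1 := congrArg Subtype.val (mul_inv_cancel V)
    conv_lhs => rw [hr]
    rw [vecMul_vecMul, hVV, vecMul_one]

lemma exists_orthogonalGroup_forall_sq_det_cons {k : ℕ} (r : Fin (k + 1) → ℝ) :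
    ∃ V : orthogonalGroup (Fin (k + 1)) ℝ, ∀ R : Fin k → Fin (k + 1) → ℝ,
      (of (Fin.cons r R : Fin (k + 1) → Fin (k + 1) → ℝ)).det ^ 2 =
        r ⬝ᵥ r * (of fun i j : Fin k ↦ (R i ᵥ* V.1) j.succ).det ^ 2 := by
  obtain ⟨c, V, hc, hrV⟩ := exists_vecMul_orthogonalGroup_eq_single r 0
  refine ⟨V, fun R ↦ ?_⟩
  set X := of (Fin.cons r R : Fin (k + 1) → Fin (k + 1) → ℝ)
  have hrow : (X * V.1) 0 = Pi.single 0 c := hrV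
  have hdet : (X * V.1).det = c * (of fun i j : Fin k ↦ (R i ᵥ* V.1) j.succ).det := by
    rw [det_succ_row_zero, Finset.sum_eq_single 0 (fun j _ hj ↦ by simp [hrow, hj]) (by simp),
      hrow]
    simp only [Pi.single_eq_same, Fin.val_zero, pow_zero, one_mul]
    rfl
  rw [← hc, ← mul_pow, ← hdet, det_mul, mul_pow, sq_det_orthogonalGroup, mul_one]

lemma measurePreserving_cons_gaussianMatrix (k : ℕ) (n : Type*) :
    MeasurePreserving (fun p : (n → ℝ) × (Fin k → n → ℝ) ↦ (Fin.cons p.1 p.2 : Fin (k + 1) → n → ℝ))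
      ((gaussianVector n).prod (gaussianMatrix (Fin k) n)) (gaussianMatrix (Fin (k + 1)) n) := by
  simp only [gaussianMatrix_eq_pi]
  convert (measurePreserving_piFinSuccAbove (fun _ : Fin (k + 1) ↦ gaussianVector n) 0).symm using 2
  simp [MeasurableEquiv.piFinSuccAbove, Fin.consEquiv]

lemma map_sq_det_cons_gaussianMatrix {k : ℕ} (r : Fin (k + 1) → ℝ) :
    (gaussianMatrix (Fin k) (Fin (k + 1))).map
        (fun R ↦ (of (Fin.cons r R : Fin (k + 1) → Fin (k + 1) → ℝ)).det ^ 2 / 2 ^ (k + 1)) =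
      (gaussianMatrix (Fin k) (Fin k)).map (fun X ↦ r ⬝ᵥ r / 2 * ((of X).det ^ 2 / 2 ^ k)) := by
  obtain ⟨V, hV⟩ := exists_orthogonalGroup_forall_sq_det_cons r
  have hmp := (measurePreserving_gaussianMatrix_submatrix Function.injective_id
    (Fin.succ_injective k)).comp (measurePreserving_gaussianMatrix_mul (m := Fin k) V)
  have hdet := measurable_det_of (n := Fin k)
  rw [← hmp.map_eq, Measure.map_map (by fun_prop) hmp.measurable]
  congr with R
  rw [hV, pow_succ' (2 : ℝ), mul_div_mul_comm]
  rfl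

lemma map_sq_det_gaussianMatrix_succ (k : ℕ) :
    (gaussianMatrix (Fin (k + 1)) (Fin (k + 1))).map (fun X ↦ (of X).det ^ 2 / 2 ^ (k + 1)) =
      (((gaussianVector (Fin (k + 1))).map fun r ↦ r ⬝ᵥ r / 2).prod
        ((gaussianMatrix (Fin k) (Fin k)).map fun X ↦ (of X).det ^ 2 / 2 ^ k)).map
          fun p ↦ p.1 * p.2 := by
  have hdet (n : ℕ) := measurable_det_of (n := Fin n)
  have hcons := measurePreserving_cons_gaussianMatrix k (Fin (k + 1))
  have hcons_meas := hcons.measurable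
  rw [Measure.map_prod_map _ _ (by fun_prop) (by fun_prop),
    Measure.map_map (by fun_prop) (by fun_prop), ← hcons.map_eq,
    Measure.map_map (by fun_prop) hcons_meas]
  let F (r : Fin (k + 1) → ℝ) (R : Fin k → Fin (k + 1) → ℝ) : ℝ :=
    (of (Fin.cons r R : Fin (k + 1) → Fin (k + 1) → ℝ)).det ^ 2 / 2 ^ (k + 1)
  let G (r : Fin (k + 1) → ℝ) (X : Fin k → Fin k → ℝ) : ℝ := r ⬝ᵥ r / 2 * ((of X).det ^ 2 / 2 ^ k)
  have hF : Measurable (Function.uncurry F) := (((hdet _).comp hcons_meas).pow_const 2).div_const _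
  have hG : Measurable (Function.uncurry G) := by fun_prop
  exact map_uncurry_prod_congr hF hG (ae_of_all _ map_sq_det_cons_gaussianMatrix)

lemma map_prod_pi_succ {M : Type*} [CommMonoid M] [MeasurableSpace M] [MeasurableMul₂ M] {k : ℕ}
    (μ : Fin (k + 1) → Measure M) [∀ j, SigmaFinite (μ j)] :
    (Measure.pi μ).map (fun t ↦ ∏ j, t j) =
      ((μ (Fin.last k)).prod ((Measure.pi fun j : Fin k ↦ μ j.castSucc).map fun t ↦ ∏ j, t j)).map
        fun p ↦ p.1 * p.2 := by
  have hsplit := measurePreserving_piFinSuccAbove μ (Fin.last k)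
  simp only [Fin.succAbove_last] at hsplit
  conv_rhs => rw [← Measure.map_id (μ := μ (Fin.last k))]
  rw [Measure.map_prod_map _ _ measurable_id (by fun_prop), ← hsplit.map_eq,
    Measure.map_map (by fun_prop) (by fun_prop), Measure.map_map (by fun_prop) (by fun_prop)]
  congr with t
  simp [Fin.prod_univ_castSucc, mul_comm, MeasurableEquiv.piFinSuccAbove, Fin.init]

instance isProbabilityMeasure_gammaMeasure_one_add_half (j : ℕ) :
    IsProbabilityMeasure (gammaMeasure ((1 + j : ℝ) / 2) 1) :=
  isProbabilityMeasure_gammaMeasure (by positivity) one_pos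

lemma map_sq_det_div_two_pow_gaussianMatrix (k : ℕ) :
    (gaussianMatrix (Fin k) (Fin k)).map (fun X ↦ (of X).det ^ 2 / 2 ^ k) =
      (Measure.pi fun j : Fin k ↦ gammaMeasure ((1 + j) / 2) 1).map (fun t ↦ ∏ j, t j) := by
  induction k with
  | zero => simp [Measure.map_const]
  | succ k ih =>
    rw [map_sq_det_gaussianMatrix_succ, ih, map_dotProduct_self_half_gaussianVector,
      map_prod_pi_succ]
    simp [add_comm]

lemma ae_forall_pos_pi_gammaMeasure (k : ℕ) :
    ∀ᵐ t ∂Measure.pi fun j : Fin k ↦ gammaMeasure ((1 + j) / 2) 1, ∀ j, 0 < t j :=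
  ae_all_iff.mpr fun j ↦ (Measure.quasiMeasurePreserving_eval _ j).ae (ae_pos_gammaMeasure _ _)

lemma ae_det_ne_zero_gaussianMatrix (k : ℕ) :
    ∀ᵐ X ∂gaussianMatrix (Fin k) (Fin k), (of X).det ≠ 0 := by
  have hmeas : Measurable fun X : Fin k → Fin k → ℝ ↦ (of X).det ^ 2 / 2 ^ k :=
    (measurable_det_of.pow_const 2).div_const _
  have hlaw : ∀ᵐ y ∂(gaussianMatrix (Fin k) (Fin k)).map fun X ↦ (of X).det ^ 2 / 2 ^ k, y ≠ 0 := by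
    rw [map_sq_det_div_two_pow_gaussianMatrix, ae_map_iff (p := fun y ↦ y ≠ 0) (by fun_prop)
      (measurableSet_singleton 0).compl]
    exact (ae_forall_pos_pi_gammaMeasure k).mono fun t ht ↦ (Finset.prod_pos fun j _ ↦ ht j).ne'
  filter_upwards [ae_of_ae_map hmeas.aemeasurable hlaw] with X hX hzero
  simp [hzero] at hX

lemma ae_det_mul_transpose_ne_zero_gaussianMatrix {k : ℕ} {n : Type*} [Fintype n]
    (c : Fin k ↪ n) : ∀ᵐ W ∂gaussianMatrix (Fin k) n, (of W * (of W)ᵀ).det ≠ 0 := by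
  have hmp := measurePreserving_gaussianMatrix_submatrix (Function.injective_id (α := Fin k))
    c.injective
  filter_upwards [hmp.quasiMeasurePreserving.ae (ae_det_ne_zero_gaussianMatrix k)] with W hW
  exact det_mul_transpose_ne_zero_of_det_submatrix_ne_zero hW

end GaussianDeterminant

section HaarMinors

variable {k n : Type*} [Fintype k] [DecidableEq k] [Fintype n]

lemma measurable_sqPluckerCoord_of (c : k → n) :
    Measurable fun W : k → n → ℝ ↦ sqPluckerCoord (of W) c := by
  have hminor : Continuous fun W : k → n → ℝ ↦ ((of W).submatrix id c).det :=
    (continuous_id.matrix_submatrix _ _).matrix_det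
  have hgram : Continuous fun W : k → n → ℝ ↦ (of W * (of W)ᵀ).det :=
    (Continuous.matrix_mul continuous_id continuous_id.matrix_transpose).matrix_det
  exact (hminor.measurable.pow_const 2).div hgram.measurable

variable [DecidableEq n]

lemma map_sqPluckerCoord_gaussianMatrix_mul (U : orthogonalGroup n ℝ) (c : k → n) :
    (gaussianMatrix k n).map (fun W ↦ sqPluckerCoord (of W * U.1) c) =
      (gaussianMatrix k n).map fun W ↦ sqPluckerCoord (of W) c := by
  have hmp := measurePreserving_gaussianMatrix_mul (m := k) U
  conv_rhs => rw [← hmp.map_eq, Measure.map_map (measurable_sqPluckerCoord_of c) hmp.measurable]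
  rfl

variable [MeasurableSpace (orthogonalGroup n ℝ)] [BorelSpace (orthogonalGroup n ℝ)]

lemma measurable_orthogonalGroup_apply (i j : n) :
    Measurable fun U : orthogonalGroup n ℝ ↦ U.1 i j :=
  (continuous_subtype_val.matrix_elem i j).measurable

lemma measurable_sq_det_submatrix_orthogonalGroup (e c : k → n) :
    Measurable fun U : orthogonalGroup n ℝ ↦ (U.1.submatrix e c).det ^ 2 :=
  ((continuous_subtype_val.matrix_submatrix e c).matrix_det.pow 2).measurable

lemma measurable_sqPluckerCoord_mul_orthogonalGroup (c : k → n) :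
    Measurable fun p : orthogonalGroup n ℝ × (k → n → ℝ) ↦ sqPluckerCoord (of p.2 * p.1.1) c := by
  refine (measurable_sqPluckerCoord_of c).comp (measurable_pi_lambda _ fun i ↦
    measurable_pi_lambda _ fun j ↦ Finset.measurable_sum _ fun l _ ↦ ?_)
  have happly := measurable_orthogonalGroup_apply (n := n)
  exact (by fun_prop : Measurable fun p : orthogonalGroup n ℝ × (k → n → ℝ) ↦ p.2 i l).mul
    ((happly l j).comp measurable_fst)

lemma map_sqPluckerCoord_mul_left_eq_map_sq_det_submatrix (μ : Measure (orthogonalGroup n ℝ))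
    [μ.IsMulLeftInvariant] {W : Matrix k n ℝ} (hW : (W * Wᵀ).det ≠ 0) (e : k ↪ n) (c : k → n) :
    μ.map (fun U ↦ sqPluckerCoord (W * U.1) c) = μ.map fun U ↦ (U.1.submatrix e c).det ^ 2 := by
  obtain ⟨L, V, hLV⟩ := exists_eq_mul_submatrix_orthogonalGroup W e
  simp_rw [sqPluckerCoord_mul_orthogonalGroup hLV hW _ c]
  conv_rhs => rw [← map_mul_left_eq_self μ V, Measure.map_map
    (measurable_sq_det_submatrix_orthogonalGroup _ _) (continuous_const_mul V).measurable]
  rfl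

lemma map_sq_det_submatrix_eq_map_sqPluckerCoord {k : ℕ} (μ : Measure (orthogonalGroup n ℝ))
    [IsProbabilityMeasure μ] [μ.IsMulLeftInvariant] (e c : Fin k ↪ n) :
    μ.map (fun U ↦ (U.1.submatrix e c).det ^ 2) =
      (gaussianMatrix (Fin k) n).map fun W ↦ sqPluckerCoord (of W) c :=
  (eq_of_ae_map_eq (μ := μ) (ν := gaussianMatrix (Fin k) n)
    (F := fun U W ↦ sqPluckerCoord (of W * U.1) c)
    (measurable_sqPluckerCoord_mul_orthogonalGroup c)
    (ae_of_all _ fun U ↦ map_sqPluckerCoord_gaussianMatrix_mul U c)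
    ((ae_det_mul_transpose_ne_zero_gaussianMatrix c).mono fun _ hW ↦
      map_sqPluckerCoord_mul_left_eq_map_sq_det_submatrix μ hW e c)).symm

end HaarMinors

section Limit

variable {κ : ℕ}

/-- The `κ × (M + κ)` matrix whose columns are the first `M + κ` vectors of the sequence `ω`,
permuted cyclically so that its last `κ` columns `ω 0, …, ω (κ - 1)` do not depend on `M`. -/
def columnMatrix (M : ℕ) (ω : ℕ → Fin κ → ℝ) : Matrix (Fin κ) (Fin (M + κ)) ℝ :=
  of fun i l ↦ ω (finAddFlip l : Fin (κ + M)) i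

lemma columnMatrix_submatrix_natAdd (M : ℕ) (ω : ℕ → Fin κ → ℝ) :
    (columnMatrix M ω).submatrix id (Fin.natAdd M) = of fun i j : Fin κ ↦ ω j i := by
  ext i j
  simp [columnMatrix]

lemma columnMatrix_mul_transpose_apply (M : ℕ) (ω : ℕ → Fin κ → ℝ) (i j : Fin κ) :
    (columnMatrix M ω * (columnMatrix M ω)ᵀ) i j =
      ∑ l ∈ Finset.range (M + κ), ω l i * ω l j := by
  calc
    _ = ∑ l : Fin (κ + M), ω l i * ω l j :=
      finAddFlip.sum_comp fun l : Fin (κ + M) ↦ ω l i * ω l j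
    _ = _ := by rw [← Finset.sum_range fun l ↦ ω l i * ω l j, add_comm]

lemma measurePreserving_columnMatrix (M κ : ℕ) :
    MeasurePreserving (fun (ω : ℕ → Fin κ → ℝ) i l ↦ columnMatrix M ω i l)
      (gaussianMatrix ℕ (Fin κ)) (gaussianMatrix (Fin κ) (Fin (M + κ))) :=
  measurePreserving_gaussianMatrix_transpose.comp <|
    measurePreserving_gaussianMatrix_submatrix (Fin.val_injective.comp finAddFlip.injective)
      Function.injective_id

lemma measurePreserving_initialColumns (κ : ℕ) :
    MeasurePreserving (fun (ω : ℕ → Fin κ → ℝ) (i j : Fin κ) ↦ ω j i)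
      (gaussianMatrix ℕ (Fin κ)) (gaussianMatrix (Fin κ) (Fin κ)) :=
  measurePreserving_gaussianMatrix_transpose.comp <|
    measurePreserving_gaussianMatrix_submatrix Fin.val_injective Function.injective_id

lemma measurable_sqPluckerCoord_columnMatrix (M κ : ℕ) :
    Measurable fun ω : ℕ → Fin κ → ℝ ↦ sqPluckerCoord (columnMatrix M ω) (Fin.natAdd M) :=
  (measurable_sqPluckerCoord_of _).comp (measurePreserving_columnMatrix M κ).measurable

lemma measurable_det_initialColumns (κ : ℕ) :
    Measurable fun ω : ℕ → Fin κ → ℝ ↦ (of fun i j : Fin κ ↦ ω j i).det :=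
  measurable_det_of.comp (measurePreserving_initialColumns κ).measurable

lemma tendsto_det_columnMatrix_mul_transpose {ω : ℕ → Fin κ → ℝ}
    (hω : ∀ i j, Tendsto (fun N : ℕ ↦ (∑ l ∈ Finset.range N, ω l i * ω l j) / N) atTop
      (𝓝 ((1 : Matrix (Fin κ) (Fin κ) ℝ) i j))) :
    Tendsto (fun M : ℕ ↦ (columnMatrix M ω * (columnMatrix M ω)ᵀ).det / (M + κ : ℝ) ^ κ) atTop
      (𝓝 1) := by
  have hgram : Tendsto
      (fun M : ℕ ↦ (M + κ : ℝ)⁻¹ • (columnMatrix M ω * (columnMatrix M ω)ᵀ)) atTop (𝓝 1) := by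
    refine tendsto_pi_nhds.mpr fun i ↦ tendsto_pi_nhds.mpr fun j ↦ ?_
    refine ((hω i j).comp (tendsto_add_atTop_nat κ)).congr fun M ↦ ?_
    rw [Matrix.smul_apply, columnMatrix_mul_transpose_apply, smul_eq_mul, ← div_eq_inv_mul,
      Function.comp_apply, Nat.cast_add]
  have hdet := ((Continuous.matrix_det continuous_id).tendsto _).comp hgram
  simpa [Function.comp_def, div_eq_inv_mul] using hdet

lemma tendsto_half_log_div_add_half_mul_log {x : ℝ} (hx : x ≠ 0) {g : ℕ → ℝ}
    (hg : Tendsto (fun M : ℕ ↦ g M / (M + κ : ℝ) ^ κ) atTop (𝓝 1)) :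
    Tendsto (fun M : ℕ ↦ 1 / 2 * Real.log (x / g M) + κ / 2 * Real.log (M / 2)) atTop
      (𝓝 (1 / 2 * Real.log (x / 2 ^ κ))) := by
  have hratio : Tendsto (fun M : ℕ ↦ x / 2 ^ κ * ((M / (M + κ : ℝ)) ^ κ / (g M / (M + κ : ℝ) ^ κ)))
      atTop (𝓝 (x / 2 ^ κ)) := by
    simpa using
      (((tendsto_natCast_div_add_atTop (κ : ℝ)).pow κ).div hg one_ne_zero).const_mul (x / 2 ^ κ)
  refine ((hratio.log (by positivity)).const_mul (1 / 2)).congr' ?_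
  filter_upwards [eventually_gt_atTop 0, hg.eventually_ne one_ne_zero] with M hM hgM
  have hgM : g M ≠ 0 := fun h ↦ hgM (by simp [h])
  have hprod : x / 2 ^ κ * ((M / (M + κ : ℝ)) ^ κ / (g M / (M + κ : ℝ) ^ κ)) =
      x / g M * (M / 2 : ℝ) ^ κ := by
    simp only [div_pow]
    field_simp
  rw [hprod, Real.log_mul (by positivity) (by positivity), Real.log_pow]
  ring

lemma ae_tendsto_half_log_sqPluckerCoord_columnMatrix (κ : ℕ) :
    ∀ᵐ ω ∂gaussianMatrix ℕ (Fin κ), Tendsto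
      (fun M : ℕ ↦ 1 / 2 * Real.log (sqPluckerCoord (columnMatrix M ω) (Fin.natAdd M)) +
        κ / 2 * Real.log (M / 2)) atTop
      (𝓝 (1 / 2 * Real.log ((of fun i j : Fin κ ↦ ω j i).det ^ 2 / 2 ^ κ))) := by
  filter_upwards [ae_tendsto_average_gaussianMatrix, (measurePreserving_initialColumns
    κ).quasiMeasurePreserving.ae (ae_det_ne_zero_gaussianMatrix κ)] with ω haverage hdet
  simp only [sqPluckerCoord, columnMatrix_submatrix_natAdd]
  exact tendsto_half_log_div_add_half_mul_log (pow_ne_zero 2 hdet)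
    (tendsto_det_columnMatrix_mul_transpose haverage)

lemma map_half_log_sq_det_initialColumns (κ : ℕ) :
    (gaussianMatrix ℕ (Fin κ)).map
        (fun ω ↦ 1 / 2 * Real.log ((of fun i j : Fin κ ↦ ω j i).det ^ 2 / 2 ^ κ)) =
      (Measure.pi fun j : Fin κ ↦ gammaMeasure ((1 + j) / 2) 1).map
        fun t ↦ 1 / 2 * ∑ j, Real.log (t j) := by
  have hmp := measurePreserving_initialColumns κ
  have hmeas : Measurable fun X : Fin κ → Fin κ → ℝ ↦ (of X).det ^ 2 / 2 ^ κ :=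
    (measurable_det_of.pow_const 2).div_const _
  have hφ : Measurable fun y : ℝ ↦ 1 / 2 * Real.log y := by fun_prop
  calc
    _ = ((gaussianMatrix (Fin κ) (Fin κ)).map fun X ↦ (of X).det ^ 2 / 2 ^ κ).map
          fun y ↦ 1 / 2 * Real.log y := by
      rw [Measure.map_map hφ hmeas, ← hmp.map_eq, Measure.map_map (hφ.comp hmeas) hmp.measurable]
      rfl
    _ = (Measure.pi fun j : Fin κ ↦ gammaMeasure ((1 + j) / 2) 1).map
          fun t ↦ 1 / 2 * Real.log (∏ j, t j) := by
      rw [map_sq_det_div_two_pow_gaussianMatrix, Measure.map_map hφ (by fun_prop)]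
      rfl
    _ = _ := Measure.map_congr <| (ae_forall_pos_pi_gammaMeasure κ).mono fun t ht ↦ by
      simp only [Real.log_prod fun j _ ↦ (ht j).ne']

instance (N : ℕ) : BorelSpace (orthogonalGroup (Fin N) ℝ) := ⟨rfl⟩

lemma sq_det_truncO (M κ : ℕ) (U : orthogonalGroup (Fin (M + κ)) ℝ) :
    (truncO (M + κ) M (Nat.le_add_right M κ) U).det ^ 2 =
      (U.1.submatrix (Fin.natAdd M) (Fin.natAdd M)).det ^ 2 := by
  have hU : U.1.submatrix finSumFinEquiv finSumFinEquiv *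
      (U.1.submatrix finSumFinEquiv finSumFinEquiv)ᵀ = (1 : Matrix (Fin M ⊕ Fin κ) _ ℝ) := by
    rw [transpose_submatrix, submatrix_mul_equiv, (mem_orthogonalGroup_iff _ ℝ).mp U.2,
      submatrix_one_equiv]
  have hdet := det_mul_det_toBlocks₂₂_of_mul_transpose_eq_one hU
  rw [det_submatrix_equiv_self] at hdet
  calc
    _ = (U.1.det * (U.1.submatrix (Fin.natAdd M) (Fin.natAdd M)).det) ^ 2 :=
      congrArg (· ^ 2) hdet.symm
    _ = _ := by rw [mul_pow, sq_det_orthogonalGroup, one_mul]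

lemma map_log_abs_det_truncO (M κ : ℕ) (μ : Measure (orthogonalGroup (Fin (M + κ)) ℝ))
    [IsProbabilityMeasure μ] [μ.IsMulLeftInvariant] (a : ℝ) :
    μ.map (fun U ↦ Real.log |(truncO (M + κ) M (Nat.le_add_right M κ) U).det| + a) =
      (gaussianMatrix ℕ (Fin κ)).map fun ω ↦
        1 / 2 * Real.log (sqPluckerCoord (columnMatrix M ω) (Fin.natAdd M)) + a := by
  have hmp := measurePreserving_columnMatrix M κ
  have hφ : Measurable fun y : ℝ ↦ 1 / 2 * Real.log y + a := by fun_prop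
  have hcoord := measurable_sqPluckerCoord_of (k := Fin κ) (Fin.natAdd M)
  have hlog (x : ℝ) : Real.log |x| = 1 / 2 * Real.log (x ^ 2) := by
    rw [Real.log_abs, Real.log_pow]
    ring
  simp only [hlog, sq_det_truncO]
  calc
    _ = (μ.map fun U ↦ (U.1.submatrix (Fin.natAdd M) (Fin.natAdd M)).det ^ 2).map
          fun y ↦ 1 / 2 * Real.log y + a := by
      rw [Measure.map_map hφ (measurable_sq_det_submatrix_orthogonalGroup _ _)]
      rfl
    _ = ((gaussianMatrix (Fin κ) (Fin (M + κ))).map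
          fun W ↦ sqPluckerCoord (of W) (Fin.natAdd M)).map fun y ↦ 1 / 2 * Real.log y + a :=
      congrArg _ (map_sq_det_submatrix_eq_map_sqPluckerCoord μ (Fin.natAddEmb M) (Fin.natAddEmb M))
    _ = _ := by
      rw [Measure.map_map hφ hcoord, ← hmp.map_eq, Measure.map_map (hφ.comp hcoord) hmp.measurable]
      rfl

end Limit

theorem limit_law_log_det_weak_non_unitarity_orthogonal
    (κ : ℕ) (hκ : 1 ≤ κ)
    (μ : ∀ M : ℕ, Measure (Matrix.orthogonalGroup (Fin (M + κ)) ℝ))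
    (hHaar : ∀ M, (μ M).IsHaarMeasure) (hProb : ∀ M, IsProbabilityMeasure (μ M)) :
    ∀ f : BoundedContinuousFunction ℝ ℝ,
      Tendsto (fun M : ℕ =>
        ∫ y, f y ∂(Measure.map (fun U =>
          Real.log (|Matrix.det (truncO (M + κ) M (Nat.le_add_right M κ) U)|)
            + ((κ : ℝ) / 2) * Real.log ((M : ℝ) / 2)) (μ M)))
        atTop
        (nhds (∫ y, f y ∂(Measure.map
          (fun t : Fin κ → ℝ => (1 / 2) * ∑ j, Real.log (t j))
          (Measure.pi (fun j : Fin κ => gammaMeasure ((1 + j) / 2) 1))))) := by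
  intro f
  have hcoord (M : ℕ) := measurable_sqPluckerCoord_columnMatrix M κ
  have hdet := measurable_det_initialColumns κ
  have hlim := tendstoInDistribution_of_ae_tendsto
    (fun M ↦ (((hcoord M).log.const_mul _).add_const _).aemeasurable)
    (((hdet.pow_const 2).div_const _).log.const_mul _).aemeasurable
    (ae_tendsto_half_log_sqPluckerCoord_columnMatrix κ)
  simp_rw [map_log_abs_det_truncO, ← map_half_log_sq_det_initialColumns]
  exact ProbabilityMeasure.tendsto_iff_forall_integral_tendsto.mp hlim.tendsto f
end
end

section
/- Let 1 ≤ M < N. Then the law of the complex random variable det(I_M − A) under the Haar probability measure on U(N) equals the law of the product ∏_{l=1}^{M} ( 1 − e^{iω_l} √(b_l) ), where ω_1, …, ω_M, b_1, …, b_M are all independent, each ω_l is uniformly distributed on [0, 2π), and each b_l is Beta-distributed with parameters (1, N−l); equivalently, the pushforward of Haar under U ↦ det(I_M − A(U)) equals the pushforward of the product measure (⊗_{l=1}^M Uniform[0,2π)) ⊗ (⊗_{l=1}^M Beta(1, N−l)) under the map ((ω_l)_l, (b_l)_l) ↦ ∏_{l=1}^M (1 − e^{iω_l}√(b_l)) ∈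 ℂ. -/
open MeasureTheory Matrix

noncomputable section

/-- Borel measurable structure on the unitary group. -/
instance (N : ℕ) : MeasurableSpace (Matrix.unitaryGroup (Fin N) ℂ) := borel _

/-- The top-left `M × M` truncation of an `N × N` unitary matrix. -/
def trunc (N M : ℕ) (h : M ≤ N) (U : Matrix.unitaryGroup (Fin N) ℂ) :
    Matrix (Fin M) (Fin M) ℂ :=
  Matrix.submatrix (U : Matrix (Fin N) (Fin N) ℂ) (Fin.castLE h) (Fin.castLE h)

/-- The Beta probability measure on `(0,1)` with parameters `a`, `b`. -/
def betaMeasure (a b : ℝ) : Measure ℝ :=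
  MeasureTheory.volume.withDensity fun x =>
    ENNReal.ofReal ((Set.Ioo (0 : ℝ) 1).indicator
      (fun x => x ^ (a - 1) * (1 - x) ^ (b - 1)
        * (Real.Gamma (a + b) / (Real.Gamma a * Real.Gamma b))) x)

/-- The uniform probability measure on `[0, 2π)`. -/
def uniformCircle : Measure ℝ :=
  (ENNReal.ofReal (2 * Real.pi))⁻¹ •
    MeasureTheory.volume.restrict (Set.Ico (0 : ℝ) (2 * Real.pi))

/-!
Right multiplication of a Haar unitary `U` by `1 ⊕ V`, with `V` an independent Haar unitary of size
one less, does not change its law. Eliminating the first row and column of `1 - U (1 ⊕ V)` by a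
Schur complement gives `(1 - U₀₀) det (1 - A(W V))`, where `W` is a unitary matrix depending on `U`
alone. By left invariance `W V` is Haar distributed and independent of `U`, so `det (1 - A)` has the
law of `1 - U₀₀` times an independent copy of the same determinant for `M - 1` and `N - 1`.

It remains to find the law of `U₀₀`. Its phase is uniform and independent of its modulus, because
Haar measure is invariant under scalar phases. A column of `U` is distributed as a normalized
complex Gaussian vector, so `P(‖U₀₀‖² > t)` is the Gaussian measure of the cone
`‖x₀‖² > t ∑ ‖xₖ‖²`, which is `(1 - t) ^ (N - 1)`: the tail of `Beta(1, N - 1)`.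
-/

section Algebra

variable {n : ℕ}

/-- The block matrix `1 ⊕ V`, as a homomorphism of star monoids in `V`. -/
def oneDirectSum (R : Type*) [CommSemiring R] [StarRing R] (n : ℕ) :
    Matrix (Fin n) (Fin n) R →⋆* Matrix (Fin (n + 1)) (Fin (n + 1)) R where
  toFun V := .of (Fin.cons (Fin.cons 1 0) fun i => Fin.cons 0 (V i))
  map_one' := by
    ext i j
    cases i using Fin.cases <;> cases j using Fin.cases <;>
      simp [one_apply, (Fin.succ_ne_zero _).symm]
  map_mul' V W := by
    ext i j
    cases i using Fin.cases <;> cases j using Fin.cases <;>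
      simp [mul_apply, Fin.sum_univ_succ]
  map_star' V := by
    ext i j
    cases i using Fin.cases <;> cases j using Fin.cases <;> simp [star_apply]

/-- The Schur-type reduction `G ↦ D + c (1 - a)⁻¹ r` of `G = [[a, r], [c, D]]` (with `a` scalar):
`1 - feedback G` is the Schur complement of `1 - a` in `1 - G`. If `w = feedback G v` then
`G (x, v) = (x, w)` for some `x`, i.e. the first output of `G` is fed back into its first input. -/
def feedback {K : Type*} [Field K] (G : Matrix (Fin (n + 1)) (Fin (n + 1)) K) :
    Matrix (Fin n) (Fin n) K :=
  .of fun i j => G i.succ j.succ + G i.succ 0 * ((1 - G 0 0)⁻¹ * G 0 j.succ)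

theorem det_one_sub_eq_mul_det_one_sub_feedback {K : Type*} [Field K]
    (G : Matrix (Fin (n + 1)) (Fin (n + 1)) K) (hG : G 0 0 ≠ 1) :
    (1 - G).det = (1 - G 0 0) * (1 - feedback G).det := by
  have ha : 1 - G 0 0 ≠ 0 := sub_ne_zero.2 hG.symm
  let B : Matrix (Fin (n + 1)) (Fin (n + 1)) K :=
    .of (Fin.cons ((1 - G) 0) fun i => Fin.cons 0 ((1 - feedback G) i))
  have clear_column : (1 - G).det = B.det := by
    refine det_eq_of_forall_row_eq_smul_add_const
      (Fin.cons 0 fun i => -((1 - G 0 0)⁻¹ * G i.succ 0)) 0 rfl fun i j => ?_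
    cases i using Fin.cases with
    | zero => simp [B]
    | succ i =>
      cases j using Fin.cases with
      | zero =>
        simp only [B, Matrix.sub_apply, one_apply, of_apply, Fin.succ_ne_zero, Fin.cons_succ,
          Fin.cons_zero, if_false, if_true, zero_sub]
        field_simp
        ring
      | succ j =>
        simp only [B, feedback, Matrix.sub_apply, one_apply, of_apply, Fin.succ_inj,
          (Fin.succ_ne_zero _).symm, Fin.cons_succ, Fin.cons_zero, if_false, zero_sub]
        ring
  have corner : B 0 0 = 1 - G 0 0 := by simp [B]
  have below_corner (i : Fin n) : B i.succ 0 = 0 := rfl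
  have minor : B.submatrix Fin.succ Fin.succ = 1 - feedback G := rfl
  rw [clear_column, det_succ_column_zero, Fin.sum_univ_succ]
  simp [below_corner, corner, minor]

theorem feedback_mul_oneDirectSum {K : Type*} [Field K] [StarRing K]
    (G : Matrix (Fin (n + 1)) (Fin (n + 1)) K) (V : Matrix (Fin n) (Fin n) K) :
    feedback (G * oneDirectSum K n V) = feedback G * V := by
  ext i j
  simp [feedback, oneDirectSum, mul_apply, Fin.sum_univ_succ, add_mul, Finset.sum_add_distrib,
    Finset.mul_sum, mul_assoc]

theorem feedback_mem_unitaryGroup {K : Type*} [Field K] [StarRing K]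
    {G : Matrix (Fin (n + 1)) (Fin (n + 1)) K} (hG : G ∈ unitaryGroup (Fin (n + 1)) K)
    (hG₀ : G 0 0 ≠ 1) : feedback G ∈ unitaryGroup (Fin n) K := by
  have orthonormal_columns (j k : Fin (n + 1)) :
      ∑ i : Fin n, star (G i.succ j) * G i.succ k =
        (1 : Matrix (Fin (n + 1)) (Fin (n + 1)) K) j k - star (G 0 j) * G 0 k := by
    rw [← mem_unitaryGroup_iff'.1 hG, mul_apply, Fin.sum_univ_succ]
    simp [star_apply]
  rw [mem_unitaryGroup_iff']
  ext j k
  let x (l : Fin n) : K := (1 - G 0 0)⁻¹ * G 0 l.succ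
  have hx (l : Fin n) : G 0 l.succ = (1 - G 0 0) * x l :=
    (mul_inv_cancel_left₀ (sub_ne_zero.2 hG₀.symm) _).symm
  calc (star (feedback G) * feedback G) j k
      = ∑ i : Fin n, (star (G i.succ j.succ) * G i.succ k.succ
          + star (G i.succ j.succ) * G i.succ 0 * x k
          + star (x j) * (star (G i.succ 0) * G i.succ k.succ)
          + star (x j) * x k * (star (G i.succ 0) * G i.succ 0)) := by
        simp only [mul_apply, star_apply, feedback, of_apply, star_add, star_mul', x]
        exact Finset.sum_congr rfl fun i _ => by ring
    _ = (1 : Matrix (Fin n) (Fin n) K) j k := by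
        simp only [Finset.sum_add_distrib, ← Finset.mul_sum, ← Finset.sum_mul,
          orthonormal_columns, hx, star_mul', star_sub, star_one]
        simp only [one_apply, Fin.succ_inj, Fin.succ_ne_zero, (Fin.succ_ne_zero _).symm,
          if_false, if_true]
        ring

theorem sum_norm_sq_col_of_mem_unitaryGroup {𝕜 ι : Type*} [RCLike 𝕜] [Fintype ι] [DecidableEq ι]
    {U : Matrix ι ι 𝕜} (hU : U ∈ unitaryGroup ι 𝕜) (j : ι) : ∑ i, ‖U i j‖ ^ 2 = 1 := by
  have h := congrFun₂ (mem_unitaryGroup_iff'.1 hU) j j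
  simp only [mul_apply, star_apply, RCLike.star_def, RCLike.conj_mul, one_apply_eq] at h
  exact_mod_cast h

theorem apply_eq_zero_of_mem_unitaryGroup_of_apply_eq_one {𝕜 ι : Type*} [RCLike 𝕜] [Fintype ι]
    [DecidableEq ι] {U : Matrix ι ι 𝕜} (hU : U ∈ unitaryGroup ι 𝕜) {i j k : ι} (hij : U i j = 1)
    (hki : k ≠ i) : U k j = 0 := by
  have h := sum_norm_sq_col_of_mem_unitaryGroup hU j
  rw [← Finset.add_sum_erase _ _ (Finset.mem_univ i), hij, norm_one, one_pow, add_eq_left,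
    Finset.sum_eq_zero_iff_of_nonneg fun _ _ => by positivity] at h
  simpa using h k (by simp [hki])

theorem feedback_submatrix_castLE {K : Type*} [Field K] {M : ℕ} (h : M ≤ n)
    (G : Matrix (Fin (n + 1)) (Fin (n + 1)) K) :
    feedback (G.submatrix (Fin.castLE (Nat.succ_le_succ h)) (Fin.castLE (Nat.succ_le_succ h))) =
      (feedback G).submatrix (Fin.castLE h) (Fin.castLE h) :=
  rfl

theorem exists_det_one_sub_trunc_mul_oneDirectSum {M : ℕ} (h : M ≤ n)
    (U : unitaryGroup (Fin (n + 1)) ℂ) : ∃ W : unitaryGroup (Fin n) ℂ, ∀ V,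
      (1 - trunc (n + 1) (M + 1) (Nat.succ_le_succ h) (U * Unitary.map (oneDirectSum ℂ n) V)).det =
        (1 - U 0 0) * (1 - trunc n M h (W * V)).det := by
  by_cases hU : U 0 0 = 1
  · refine ⟨1, fun V => ?_⟩
    rw [hU, sub_self, zero_mul]
    refine det_eq_zero_of_column_eq_zero 0 fun i => ?_
    have first_column : trunc (n + 1) (M + 1) (Nat.succ_le_succ h)
        (U * Unitary.map (oneDirectSum ℂ n) V) i 0 = U (Fin.castLE (Nat.succ_le_succ h) i) 0 := by
      simp [trunc, oneDirectSum, mul_apply, Fin.sum_univ_succ]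
    rw [Matrix.sub_apply, first_column]
    cases i using Fin.cases with
    | zero => simp [hU]
    | succ i =>
      simp [apply_eq_zero_of_mem_unitaryGroup_of_apply_eq_one U.2 hU
        (Fin.succ_ne_zero (Fin.castLE h i))]
  · refine ⟨⟨feedback U.1, feedback_mem_unitaryGroup U.2 hU⟩, fun V => ?_⟩
    have corner : trunc (n + 1) (M + 1) (Nat.succ_le_succ h)
        (U * Unitary.map (oneDirectSum ℂ n) V) 0 0 = U 0 0 := by
      simp [trunc, oneDirectSum, mul_apply, Fin.sum_univ_succ]
    rw [det_one_sub_eq_mul_det_one_sub_feedback _ (by rwa [corner]), corner]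
    have reduced : feedback (trunc (n + 1) (M + 1) (Nat.succ_le_succ h)
        (U * Unitary.map (oneDirectSum ℂ n) V)) =
          (feedback U.1 * V.1).submatrix (Fin.castLE h) (Fin.castLE h) := by
      rw [trunc, feedback_submatrix_castLE, UnitaryGroup.mul_val, Unitary.coe_map,
        feedback_mul_oneDirectSum]
    rw [reduced]
    rfl

end Algebra

section Haar

instance (N : ℕ) : BorelSpace (unitaryGroup (Fin N) ℂ) := ⟨rfl⟩

instance {𝕜 ι : Type*} [RCLike 𝕜] [Fintype ι] [DecidableEq ι] :
    SecondCountableTopology (unitaryGroup ι 𝕜) :=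
  have : SecondCountableTopology (Matrix ι ι 𝕜) :=
    inferInstanceAs (SecondCountableTopology (ι → ι → 𝕜))
  TopologicalSpace.Subtype.secondCountableTopology _

instance {𝕜 ι : Type*} [RCLike 𝕜] [Fintype ι] [DecidableEq ι] :
    CompactSpace (unitaryGroup ι 𝕜) := by
  refine isCompact_iff_compactSpace.1 (IsCompact.of_isClosed_subset (X := Matrix ι ι 𝕜)
    (isCompact_univ_pi fun _ => isCompact_univ_pi fun _ => isCompact_closedBall 0 1)
    isClosed_unitary fun U hU i _ j _ => ?_)
  simpa using entry_norm_bound_of_unitary hU i j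

instance isMulRightInvariant_of_isHaarMeasure_of_isProbabilityMeasure {G : Type*} [Group G]
    [TopologicalSpace G] [IsTopologicalGroup G] [LocallyCompactSpace G] [MeasurableSpace G]
    [BorelSpace G] (μ : Measure G) [μ.IsHaarMeasure] [IsProbabilityMeasure μ] :
    μ.IsMulRightInvariant where
  map_mul_right_eq_self g :=
    have : IsProbabilityMeasure (μ.map (· * g)) :=
      Measure.isProbabilityMeasure_map (measurable_mul_const g).aemeasurable
    Measure.isHaarMeasure_eq_of_isProbabilityMeasure _ _

theorem exists_isHaarMeasure_isProbabilityMeasure (G : Type*) [Group G] [TopologicalSpace G]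
    [IsTopologicalGroup G] [CompactSpace G] [MeasurableSpace G] [BorelSpace G] :
    ∃ μ : Measure G, μ.IsHaarMeasure ∧ IsProbabilityMeasure μ :=
  ⟨Measure.haarMeasure ⊤, inferInstance, ⟨Measure.haarMeasure_self (K₀ := ⊤)⟩⟩

/-- The averages of `F` over `g` and over `g * φ k` agree by right invariance; for each fixed `g`
the average over `k` absorbs the unknown translation `a` by left invariance. -/
theorem map_eq_map_prod_of_forall_exists_mul {G H E : Type*} [Group G] [MeasurableSpace G]
    [MeasurableMul₂ G] [Group H] [MeasurableSpace H] [MeasurableMul H] [MeasurableSpace E]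
    (μ : Measure G) [SFinite μ] [μ.IsMulRightInvariant]
    (ν : Measure H) [IsProbabilityMeasure ν] [ν.IsMulLeftInvariant]
    {φ : H → G} (hφ : Measurable φ) {F : G → E} (hF : Measurable F)
    {Φ : G × H → E} (hΦ : Measurable Φ) (h : ∀ g, ∃ a, ∀ k, F (g * φ k) = Φ (g, a * k)) :
    μ.map F = (μ.prod ν).map Φ := by
  ext s hs
  have hE : MeasurableSet ((fun p : G × H => F (p.1 * φ p.2)) ⁻¹' s) :=
    (hF.comp (measurable_fst.mul (hφ.comp measurable_snd))) hs
  have average_right : (μ.prod ν) ((fun p => F (p.1 * φ p.2)) ⁻¹' s) = μ (F ⁻¹' s) := by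
    rw [Measure.prod_apply_symm hE]
    calc ∫⁻ k, μ ((· * φ k) ⁻¹' (F ⁻¹' s)) ∂ν = ∫⁻ _, μ (F ⁻¹' s) ∂ν := by
          simp only [measure_preimage_mul_right]
      _ = μ (F ⁻¹' s) := by simp
  have absorb_left (g : G) :
      ν {k | F (g * φ k) ∈ s} = ν (Prod.mk g ⁻¹' (Φ ⁻¹' s)) := by
    obtain ⟨a, ha⟩ := h g
    rw [← measure_preimage_mul ν a (Prod.mk g ⁻¹' (Φ ⁻¹' s))]
    simp only [ha]
    rfl
  rw [Measure.map_apply hF hs, Measure.map_apply hΦ hs, ← average_right, Measure.prod_apply hE,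
    Measure.prod_apply (hΦ hs)]
  exact lintegral_congr absorb_left

theorem continuous_unitaryGroup_apply {𝕜 ι : Type*} [RCLike 𝕜] [Fintype ι] [DecidableEq ι]
    (i j : ι) : Continuous fun U : unitaryGroup ι 𝕜 => U i j :=
  continuous_subtype_val.matrix_elem i j

theorem continuous_det_one_sub_trunc {N M : ℕ} (h : M ≤ N) :
    Continuous fun U => (1 - trunc N M h U).det :=
  (continuous_const.sub (continuous_subtype_val.matrix_submatrix _ _)).matrix_det

theorem continuous_oneDirectSum (R : Type*) [CommSemiring R] [StarRing R] [TopologicalSpace R]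
    (n : ℕ) : Continuous (oneDirectSum R n) := by
  refine continuous_matrix fun i j => ?_
  cases i using Fin.cases with
  | zero => exact continuous_const
  | succ i =>
    cases j using Fin.cases with
    | zero => exact continuous_const
    | succ j => exact continuous_id.matrix_elem i j

open scoped Measure in
theorem map_det_one_sub_trunc_succ {n M : ℕ} (h : M ≤ n)
    (μ : Measure (unitaryGroup (Fin (n + 1)) ℂ)) [SFinite μ] [μ.IsMulRightInvariant]
    (ν : Measure (unitaryGroup (Fin n) ℂ)) [IsProbabilityMeasure ν] [ν.IsMulLeftInvariant] :
    μ.map (fun U => (1 - trunc (n + 1) (M + 1) (Nat.succ_le_succ h) U).det) =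
      μ.map (fun U => 1 - U 0 0) ∗ₘ ν.map (fun V => (1 - trunc n M h V).det) := by
  have corner_measurable : Measurable fun U : unitaryGroup (Fin (n + 1)) ℂ => 1 - U 0 0 :=
    (continuous_const.sub (continuous_unitaryGroup_apply 0 0)).measurable
  have det_measurable : Measurable fun V => (1 - trunc n M h V).det :=
    (continuous_det_one_sub_trunc h).measurable
  have embed_measurable : Measurable (Unitary.map (oneDirectSum ℂ n)) :=
    (((continuous_oneDirectSum ℂ n).comp continuous_subtype_val).subtype_mk _).measurable
  rw [map_eq_map_prod_of_forall_exists_mul μ ν embed_measurable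
      (continuous_det_one_sub_trunc _).measurable
      (Φ := fun p => (1 - p.1 0 0) * (1 - trunc n M h p.2).det)
      ((corner_measurable.comp measurable_fst).mul (det_measurable.comp measurable_snd))
      (exists_det_one_sub_trunc_mul_oneDirectSum h),
    Measure.mconv, Measure.map_prod_map _ _ corner_measurable det_measurable,
    Measure.map_map measurable_mul (corner_measurable.prodMap det_measurable)]
  rfl

end Haar

section Gaussian

theorem map_norm_sq_volume_complex :
    (volume : Measure ℂ).map (‖·‖ ^ 2) =
      ENNReal.ofReal Real.pi • (volume : Measure ℝ).restrict (Set.Ioi 0) := by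
  have hm : Measurable fun z : ℂ => ‖z‖ ^ 2 := by fun_prop
  have volume_disc (a : ℝ) : (volume : Measure ℂ).map (‖·‖ ^ 2) (Set.Iio a) =
      ENNReal.ofReal Real.pi * ENNReal.ofReal a := by
    have preimage_disc : (fun z : ℂ => ‖z‖ ^ 2) ⁻¹' Set.Iio a = Metric.ball 0 √a := by
      ext z
      simp [Real.lt_sqrt]
    rw [Measure.map_apply hm measurableSet_Iio, preimage_disc, Complex.volume_ball,
      ← ENNReal.ofReal_pow (Real.sqrt_nonneg _), mul_comm, ← NNReal.coe_real_pi,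
      ENNReal.ofReal_coe_nnreal]
    congr 1
    rcases le_total 0 a with ha | ha
    · rw [Real.sq_sqrt ha]
    · simp [Real.sqrt_eq_zero_of_nonpos ha, ENNReal.ofReal_of_nonpos ha]
  refine Measure.ext_of_generateFrom_of_iUnion (Set.range Set.Iio) (fun n : ℕ => Set.Iio (n : ℝ))
    (BorelSpace.measurable_eq.trans (borel_eq_generateFrom_Iio ℝ)) isPiSystem_Iio
    (Set.iUnion_eq_univ_iff.2 exists_nat_gt) (fun n => ⟨n, rfl⟩) (fun n => ?_) ?_
  · rw [volume_disc]
    finiteness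
  · rintro _ ⟨a, rfl⟩
    rw [volume_disc, Measure.smul_apply, Measure.restrict_apply measurableSet_Iio,
      Set.Iio_inter_Ioi, Real.volume_Ioo, smul_eq_mul, sub_zero]

theorem setLIntegral_exp_neg_norm_sq_complex {s : ℝ} (hs : 0 ≤ s) :
    ∫⁻ z : ℂ in {z | s < ‖z‖ ^ 2}, ENNReal.ofReal (Real.exp (-‖z‖ ^ 2)) =
      ENNReal.ofReal Real.pi * ENNReal.ofReal (Real.exp (-s)) := by
  calc ∫⁻ z : ℂ in (‖·‖ ^ 2) ⁻¹' Set.Ioi s, ENNReal.ofReal (Real.exp (-‖z‖ ^ 2))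
      = ∫⁻ y in Set.Ioi s, ENNReal.ofReal (Real.exp (-y)) ∂(volume : Measure ℂ).map (‖·‖ ^ 2) :=
        (setLIntegral_map (f := fun y => ENNReal.ofReal (Real.exp (-y))) measurableSet_Ioi
          (by fun_prop) (by fun_prop)).symm
    _ = ENNReal.ofReal Real.pi * ∫⁻ y in Set.Ioi s, ENNReal.ofReal (Real.exp (-y)) := by
        rw [map_norm_sq_volume_complex, Measure.restrict_smul, lintegral_smul_measure,
          Measure.restrict_restrict measurableSet_Ioi, Set.Ioi_inter_Ioi, max_eq_left hs,
          smul_eq_mul]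
    _ = ENNReal.ofReal Real.pi * ENNReal.ofReal (Real.exp (-s)) := by
        rw [← ofReal_integral_eq_lintegral_ofReal (integrableOn_exp_neg_Ioi s)
          (ae_of_all _ fun y => (Real.exp_pos (-y)).le), integral_exp_neg_Ioi]

theorem lintegral_exp_neg_mul_sum_norm_sq (ι : Type*) [Fintype ι] {b : ℝ} (hb : 0 < b) :
    ∫⁻ x : ι → ℂ, ENNReal.ofReal (Real.exp (-b * ∑ i, ‖x i‖ ^ 2)) =
      ENNReal.ofReal ((Real.pi / b) ^ Fintype.card ι) := by
  have integral_eq : ∫ x : ι → ℂ, Real.exp (-b * ∑ i, ‖x i‖ ^ 2) =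
      (Real.pi / b) ^ Fintype.card ι := by
    simp only [Finset.mul_sum, Real.exp_sum]
    rw [integral_fintype_prod_volume_eq_pow fun z : ℂ => Real.exp (-b * ‖z‖ ^ 2),
      GaussianFourier.integral_rexp_neg_mul_sq_norm hb]
    simp
  rw [← integral_eq, ofReal_integral_eq_lintegral_ofReal
    (.of_integral_ne_zero (integral_eq ▸ by positivity)) (ae_of_all _ fun _ => by positivity)]

/-- The measure on `ℂ^ι` with density `exp (-∑ i, ‖x i‖ ^ 2)`: the law of a vector of independent
standard complex Gaussians, up to the constant factor `π ^ card ι`. -/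
def complexGaussian (ι : Type*) [Fintype ι] : Measure (ι → ℂ) :=
  volume.withDensity fun x => ENNReal.ofReal (Real.exp (-∑ i, ‖x i‖ ^ 2))

theorem complexGaussian_univ (ι : Type*) [Fintype ι] :
    complexGaussian ι Set.univ = ENNReal.ofReal (Real.pi ^ Fintype.card ι) := by
  simpa [complexGaussian] using lintegral_exp_neg_mul_sum_norm_sq ι one_pos

instance (ι : Type*) [Fintype ι] : IsFiniteMeasure (complexGaussian ι) :=
  ⟨by rw [complexGaussian_univ]; exact ENNReal.ofReal_lt_top⟩

theorem lintegral_exp_neg_mul_sum_norm_sq_complexGaussian (ι : Type*) [Fintype ι] {c : ℝ}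
    (hc : -1 < c) :
    ∫⁻ x, ENNReal.ofReal (Real.exp (-(c * ∑ i, ‖x i‖ ^ 2))) ∂complexGaussian ι =
      ENNReal.ofReal ((Real.pi / (1 + c)) ^ Fintype.card ι) := by
  rw [complexGaussian, lintegral_withDensity_eq_lintegral_mul _ (by fun_prop) (by fun_prop),
    ← lintegral_exp_neg_mul_sum_norm_sq ι (by linarith : 0 < 1 + c)]
  refine lintegral_congr fun x => ?_
  rw [Pi.mul_apply, ← ENNReal.ofReal_mul (Real.exp_pos _).le, ← Real.exp_add]
  ring_nf

theorem measurePreserving_withDensity_comp {α β : Type*} [MeasurableSpace α] [MeasurableSpace β]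
    {μ : Measure α} {ν : Measure β} {f : α → β} (hf : MeasurePreserving f μ ν)
    {g : β → ENNReal} (hg : Measurable g) :
    MeasurePreserving f (μ.withDensity (g ∘ f)) (ν.withDensity g) := by
  refine ⟨hf.measurable, Measure.ext fun s hs => ?_⟩
  rw [Measure.map_apply hf.measurable hs, withDensity_apply _ (hf.measurable hs),
    withDensity_apply _ hs]
  exact hf.setLIntegral_comp_preimage hs hg

theorem measurePreserving_piFinSuccAbove_complexGaussian {n : ℕ} (i : Fin (n + 1)) :
    MeasurePreserving (MeasurableEquiv.piFinSuccAbove (fun _ => ℂ) i)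
      (complexGaussian (Fin (n + 1)))
      ((volume.withDensity fun z : ℂ => ENNReal.ofReal (Real.exp (-‖z‖ ^ 2))).prod
        (complexGaussian (Fin n))) := by
  rw [complexGaussian, complexGaussian, prod_withDensity (by fun_prop) (by fun_prop)]
  convert! measurePreserving_withDensity_comp
    (volume_preserving_piFinSuccAbove (fun _ : Fin (n + 1) => ℂ) i) ?_ using 2
  · ext x
    rw [Function.comp_apply, ← ENNReal.ofReal_mul (Real.exp_pos _).le, ← Real.exp_add,
      Fin.sum_univ_succAbove _ i, neg_add]
    rfl
  · fun_prop

theorem complexGaussian_setOf_mul_sum_norm_sq_lt {n : ℕ} (i : Fin (n + 1)) {t : ℝ} (ht₀ : 0 ≤ t)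
    (ht₁ : t < 1) : complexGaussian (Fin (n + 1)) {x | t * ∑ k, ‖x k‖ ^ 2 < ‖x i‖ ^ 2} =
      ENNReal.ofReal ((1 - t) ^ n) * complexGaussian (Fin (n + 1)) Set.univ := by
  have ht : 0 < 1 - t := sub_pos.2 ht₁
  let c := t / (1 - t)
  have hc : 0 ≤ c := by positivity
  let S : Set (ℂ × (Fin n → ℂ)) := {p | c * ∑ k, ‖p.2 k‖ ^ 2 < ‖p.1‖ ^ 2}
  have hS : MeasurableSet S := measurableSet_lt (by fun_prop) (by fun_prop)
  have preimage_S : {x : Fin (n + 1) → ℂ | t * ∑ k, ‖x k‖ ^ 2 < ‖x i‖ ^ 2} =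
      MeasurableEquiv.piFinSuccAbove (fun _ => ℂ) i ⁻¹' S := by
    ext x
    change t * ∑ k, ‖x k‖ ^ 2 < ‖x i‖ ^ 2 ↔ c * ∑ k, ‖x (i.succAbove k)‖ ^ 2 < ‖x i‖ ^ 2
    rw [Fin.sum_univ_succAbove _ i, div_mul_eq_mul_div, div_lt_iff₀ ht]
    constructor <;> intro h <;> linarith
  have slice (y : Fin n → ℂ) :
      (volume.withDensity fun z : ℂ => ENNReal.ofReal (Real.exp (-‖z‖ ^ 2)))
        ((fun z => (z, y)) ⁻¹' S) =
      ENNReal.ofReal Real.pi * ENNReal.ofReal (Real.exp (-(c * ∑ k, ‖y k‖ ^ 2))) := by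
    rw [withDensity_apply _ (measurable_prodMk_right hS)]
    have threshold_nonneg : 0 ≤ c * ∑ k, ‖y k‖ ^ 2 := by positivity
    exact setLIntegral_exp_neg_norm_sq_complex threshold_nonneg
  rw [preimage_S, (measurePreserving_piFinSuccAbove_complexGaussian i).measure_preimage
    hS.nullMeasurableSet, Measure.prod_apply_symm hS]
  calc ∫⁻ y, (volume.withDensity fun z : ℂ => ENNReal.ofReal (Real.exp (-‖z‖ ^ 2)))
        ((fun z => (z, y)) ⁻¹' S) ∂complexGaussian (Fin n)
      = ENNReal.ofReal Real.pi * ENNReal.ofReal ((Real.pi / (1 + c)) ^ n) := by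
        simp only [slice]
        rw [lintegral_const_mul _ (by fun_prop),
          lintegral_exp_neg_mul_sum_norm_sq_complexGaussian _ (by linarith), Fintype.card_fin]
    _ = ENNReal.ofReal ((1 - t) ^ n) * complexGaussian (Fin (n + 1)) Set.univ := by
        have hπ : Real.pi / (1 + c) = (1 - t) * Real.pi := by
          simp only [c]
          field_simp
          ring
        rw [complexGaussian_univ, Fintype.card_fin, hπ, ← ENNReal.ofReal_mul (by positivity),
          ← ENNReal.ofReal_mul (by positivity), mul_pow, pow_succ]
        ring_nf

theorem sum_norm_sq_mulVec_of_mem_unitaryGroup {𝕜 ι : Type*} [RCLike 𝕜] [Fintype ι] [DecidableEq ι]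
    {U : Matrix ι ι 𝕜} (hU : U ∈ unitaryGroup ι 𝕜) (x : ι → 𝕜) :
    ∑ i, ‖(U *ᵥ x) i‖ ^ 2 = ∑ i, ‖x i‖ ^ 2 := by
  have sum_norm_sq_eq (y : ι → 𝕜) : ((∑ i, ‖y i‖ ^ 2 : ℝ) : 𝕜) = star y ⬝ᵥ y := by
    simp [dotProduct, RCLike.conj_mul]
  have h : ((∑ i, ‖(U *ᵥ x) i‖ ^ 2 : ℝ) : 𝕜) = ((∑ i, ‖x i‖ ^ 2 : ℝ) : 𝕜) := by
    rw [sum_norm_sq_eq, sum_norm_sq_eq, star_mulVec, ← dotProduct_mulVec, mulVec_mulVec,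
      ← star_eq_conjTranspose, mem_unitaryGroup_iff'.1 hU, one_mulVec]
  exact_mod_cast h

theorem det_restrictScalars_complex {E : Type*} [AddCommGroup E] [Module ℂ E] [Module ℝ E]
    [IsScalarTower ℝ ℂ E] [Module.Free ℂ E] (f : E →ₗ[ℂ] E) :
    LinearMap.det (f.restrictScalars ℝ) = ‖LinearMap.det f‖ ^ 2 := by
  rw [LinearMap.det_restrictScalars, Algebra.norm_complex_apply, Complex.normSq_eq_norm_sq]

theorem measurePreserving_mulVec_of_mem_unitaryGroup {ι : Type*} [Fintype ι] [DecidableEq ι]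
    {U : Matrix ι ι ℂ} (hU : U ∈ unitaryGroup ι ℂ) : MeasurePreserving (U *ᵥ ·) := by
  have norm_det : ‖U.det‖ = 1 := CStarRing.norm_of_mem_unitary (det_of_mem_unitary hU)
  have abs_det : |LinearMap.det (U.mulVecLin.restrictScalars ℝ)| = 1 := by
    rw [det_restrictScalars_complex, ← toLin'_apply', LinearMap.det_toLin', norm_det, one_pow,
      abs_one]
  refine ⟨by fun_prop, ?_⟩
  have := Measure.map_linearMap_addHaar_eq_smul_addHaar (volume : Measure (ι → ℂ))
    (abs_ne_zero.1 (abs_det.trans_ne one_ne_zero))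
  rwa [abs_inv, abs_det, inv_one, ENNReal.ofReal_one, one_smul] at this

theorem measurePreserving_mulVec_complexGaussian {ι : Type*} [Fintype ι] [DecidableEq ι]
    {U : Matrix ι ι ℂ} (hU : U ∈ unitaryGroup ι ℂ) :
    MeasurePreserving (U *ᵥ ·) (complexGaussian ι) (complexGaussian ι) := by
  let density (x : ι → ℂ) : ENNReal := ENNReal.ofReal (Real.exp (-∑ i, ‖x i‖ ^ 2))
  have density_invariant : density ∘ (U *ᵥ ·) = density := by
    ext x
    simp only [density, Function.comp_apply, sum_norm_sq_mulVec_of_mem_unitaryGroup hU]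
  have h := measurePreserving_withDensity_comp (measurePreserving_mulVec_of_mem_unitaryGroup hU)
    (by fun_prop : Measurable density)
  rwa [density_invariant] at h

theorem exists_unitaryGroup_col_eq {𝕜 ι : Type*} [RCLike 𝕜] [Fintype ι] [DecidableEq ι]
    {v : ι → 𝕜} (hv : ∑ i, ‖v i‖ ^ 2 = 1) (j : ι) :
    ∃ R : unitaryGroup ι 𝕜, ∀ i, R i j = v i := by
  have unit : ‖WithLp.toLp 2 v‖ = 1 := by simp [EuclideanSpace.norm_eq, hv]
  obtain ⟨b, hb⟩ := Orthonormal.exists_orthonormalBasis_extension_of_card_eq (𝕜 := 𝕜)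
    (finrank_euclideanSpace (𝕜 := 𝕜) (ι := ι)) (v := fun _ => WithLp.toLp 2 v) (s := {j})
    ⟨by simpa using unit, fun i k hik => absurd (Subsingleton.elim i k) hik⟩
  refine ⟨⟨_, (EuclideanSpace.basisFun ι 𝕜).toMatrix_orthonormalBasis_mem_unitary b⟩, fun i => ?_⟩
  simp [Module.Basis.toMatrix_apply, hb]

end Gaussian

section Column

variable {N : ℕ} (μ : Measure (unitaryGroup (Fin N) ℂ)) [μ.IsMulRightInvariant]

theorem haar_setOf_mulVec_mem_eq_of_sum_norm_sq_eq_one {x : Fin N → ℂ}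
    (hx : ∑ i, ‖x i‖ ^ 2 = 1) (j : Fin N) (s : Set (Fin N → ℂ)) :
    μ {U | U.1 *ᵥ x ∈ s} = μ {U | (fun i => U i j) ∈ s} := by
  obtain ⟨R, hR⟩ := exists_unitaryGroup_col_eq hx j
  rw [← measure_preimage_mul_right μ R {U | (fun i => U i j) ∈ s}]
  congr 1
  ext U
  suffices U.1 *ᵥ x = fun i => (U * R) i j by simp [this]
  ext i
  simp [mul_apply, mulVec, dotProduct, hR]

/-- A Gaussian vector `x` is distributed as `U *ᵥ x` with `U` an independent Haar unitary, and the
direction of `U *ᵥ x` is distributed as a column of `U`, whatever `x ≠ 0` is. -/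
theorem complexGaussian_cone_eq_haar_mul [IsProbabilityMeasure μ] {C : Set (Fin N → ℂ)}
    (hC : MeasurableSet C) (hcone : ∀ r : ℝ, 0 < r → ∀ x, r • x ∈ C ↔ x ∈ C) (j : Fin N) :
    complexGaussian (Fin N) C =
      μ {U | (fun i => U i j) ∈ C} * complexGaussian (Fin N) Set.univ := by
  have hm : Measurable fun p : unitaryGroup (Fin N) ℂ × (Fin N → ℂ) => p.1.1 *ᵥ p.2 :=
    ((continuous_subtype_val.comp continuous_fst).matrix_mulVec continuous_snd).measurable
  have average_vector :
      (μ.prod (complexGaussian (Fin N))) ((fun p => p.1.1 *ᵥ p.2) ⁻¹' C) =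
        complexGaussian (Fin N) C := by
    rw [Measure.prod_apply (hm hC)]
    calc ∫⁻ U, complexGaussian (Fin N) ((U.1 *ᵥ ·) ⁻¹' C) ∂μ
        = ∫⁻ _, complexGaussian (Fin N) C ∂μ := lintegral_congr fun U =>
          (measurePreserving_mulVec_complexGaussian U.2).measure_preimage hC.nullMeasurableSet
      _ = complexGaussian (Fin N) C := by simp
  have ae_ne_zero : ∀ᵐ x ∂complexGaussian (Fin N), x ≠ 0 := by
    have : Nonempty (Fin N) := ⟨j⟩
    exact (withDensity_absolutelyContinuous _ _).ae_le (Measure.ae_ne volume 0)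
  rw [← average_vector, Measure.prod_apply_symm (hm hC), ← lintegral_const]
  refine lintegral_congr_ae (ae_ne_zero.mono fun x hx => ?_)
  have sum_pos : 0 < ∑ i, ‖x i‖ ^ 2 := by
    obtain ⟨i, hi⟩ := Function.ne_iff.1 hx
    exact Finset.sum_pos' (fun _ _ => by positivity)
      ⟨i, Finset.mem_univ i, pow_pos (norm_pos_iff.2 hi) 2⟩
  have normalized : ∑ i, ‖((√(∑ i, ‖x i‖ ^ 2))⁻¹ • x) i‖ ^ 2 = 1 := by
    simp only [Pi.smul_apply, norm_smul, mul_pow, ← Finset.mul_sum, Real.norm_eq_abs, sq_abs,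
      inv_pow, Real.sq_sqrt sum_pos.le, inv_mul_cancel₀ sum_pos.ne']
  rw [← haar_setOf_mulVec_mem_eq_of_sum_norm_sq_eq_one μ normalized j C]
  simp only [mulVec_smul, hcone _ (inv_pos.2 (Real.sqrt_pos.2 sum_pos))]
  rfl

theorem haar_setOf_lt_norm_sq_apply {n : ℕ} (μ : Measure (unitaryGroup (Fin (n + 1)) ℂ))
    [μ.IsMulRightInvariant] [IsProbabilityMeasure μ] (i j : Fin (n + 1)) {t : ℝ} (ht₀ : 0 ≤ t)
    (ht₁ : t < 1) :
    μ {U | t < ‖U i j‖ ^ 2} = ENNReal.ofReal ((1 - t) ^ n) := by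
  have h := complexGaussian_cone_eq_haar_mul μ
    (C := {x | t * ∑ k, ‖x k‖ ^ 2 < ‖x i‖ ^ 2})
    (measurableSet_lt (by fun_prop) (by fun_prop)) (fun r hr x => ?_) j
  · rw [complexGaussian_setOf_mul_sum_norm_sq_lt i ht₀ ht₁, ENNReal.mul_left_inj] at h
    · rw [h]
      simp only [Set.mem_ofPred_eq, sum_norm_sq_col_of_mem_unitaryGroup (Subtype.prop _), mul_one]
    · rw [complexGaussian_univ]
      positivity
    · finiteness
  · simp only [Set.mem_ofPred_eq, Pi.smul_apply, norm_smul, mul_pow, ← Finset.mul_sum]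
    rw [mul_left_comm, mul_lt_mul_iff_right₀ (pow_pos (norm_pos_iff.2 hr.ne') 2)]

end Column

section Beta

instance (a b : ℝ) : SigmaFinite (betaMeasure a b) :=
  SigmaFinite.withDensity_ofReal _

theorem isProbabilityMeasure_betaMeasure {a b : ℝ} (ha : 0 < a) (hb : 0 < b) :
    IsProbabilityMeasure (betaMeasure a b) := by
  have eq_mathlib : betaMeasure a b = ProbabilityTheory.betaMeasure a b := by
    refine congrArg volume.withDensity (funext fun x => ?_)
    rw [ProbabilityTheory.betaPDF_eq, ProbabilityTheory.beta, one_div_div]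
    simp only [Set.indicator_apply, Set.mem_Ioo]
    split_ifs <;> ring_nf
  exact eq_mathlib ▸ ProbabilityTheory.isProbabilityMeasureBeta ha hb

theorem ae_mem_Ioo_betaMeasure (a b : ℝ) : ∀ᵐ x ∂betaMeasure a b, x ∈ Set.Ioo 0 1 := by
  rw [betaMeasure, ae_withDensity_iff (by measurability)]
  refine ae_of_all _ fun x hx => ?_
  by_contra h
  simp [h] at hx

theorem betaMeasure_one_Ioi {b t : ℝ} (hb : 0 < b) (ht₀ : 0 ≤ t) (ht₁ : t ≤ 1) :
    betaMeasure 1 b (Set.Ioi t) = ENNReal.ofReal ((1 - t) ^ b) := by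
  have normalization : Real.Gamma (1 + b) / (Real.Gamma 1 * Real.Gamma b) = b := by
    have := (Real.Gamma_pos_of_pos hb).ne'
    rw [add_comm, Real.Gamma_add_one hb.ne', Real.Gamma_one]
    field_simp
  have integrable : IntervalIntegrable (fun x => (1 - x) ^ (b - 1) * b) volume t 1 := by
    have := (intervalIntegral.intervalIntegrable_rpow' (a := 1 - t) (b := 0)
      (by linarith : -1 < b - 1)).comp_sub_left 1
    simpa using this.mul_const b
  have integral_eq : ∫ x in t..1, (1 - x) ^ (b - 1) * b = (1 - t) ^ b := by
    rw [intervalIntegral.integral_mul_const,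
      intervalIntegral.integral_comp_sub_left (fun x => x ^ (b - 1)), sub_self,
      integral_rpow (.inl (by linarith)), sub_add_cancel, Real.zero_rpow hb.ne', sub_zero,
      div_mul_cancel₀ _ hb.ne']
  have nonneg : ∀ x ∈ Set.Ioc t 1, 0 ≤ (1 - x) ^ (b - 1) * b := fun x hx =>
    mul_nonneg (Real.rpow_nonneg (by linarith [hx.2]) _) hb.le
  calc betaMeasure 1 b (Set.Ioi t)
      = ∫⁻ x in Set.Ioi t, (Set.Ioo 0 1).indicator
          (fun x => ENNReal.ofReal ((1 - x) ^ (b - 1) * b)) x := by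
        rw [betaMeasure, withDensity_apply _ measurableSet_Ioi]
        refine lintegral_congr fun x => ?_
        simp only [Set.indicator_apply, normalization, sub_self, Real.rpow_zero, one_mul]
        split_ifs <;> simp
    _ = ∫⁻ x in Set.Ioc t 1, ENNReal.ofReal ((1 - x) ^ (b - 1) * b) := by
        rw [setLIntegral_indicator measurableSet_Ioo, Set.Ioo_inter_Ioi, max_eq_right ht₀,
          restrict_Ioo_eq_restrict_Ioc]
    _ = ENNReal.ofReal ((1 - t) ^ b) := by
        rw [← ofReal_integral_eq_lintegral_ofReal
          ((intervalIntegrable_iff_integrableOn_Ioc_of_le ht₁).1 integrable)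
          (ae_restrict_of_forall_mem measurableSet_Ioc nonneg),
          ← intervalIntegral.integral_of_le ht₁, integral_eq]

theorem ext_of_Ioi_of_ae_mem_Icc {a b : ℝ} {ρ σ : Measure ℝ} [IsProbabilityMeasure ρ]
    [IsProbabilityMeasure σ] (hρ : ∀ᵐ x ∂ρ, x ∈ Set.Icc a b) (hσ : ∀ᵐ x ∂σ, x ∈ Set.Icc a b)
    (h : ∀ t, a ≤ t → t < b → ρ (Set.Ioi t) = σ (Set.Ioi t)) : ρ = σ := by
  refine ext_of_generate_finite (Set.range Set.Ioi)
    (BorelSpace.measurable_eq.trans (borel_eq_generateFrom_Ioi ℝ)) isPiSystem_Ioi ?_ (by simp)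
  rintro _ ⟨t, rfl⟩
  rcases lt_or_ge t a with hta | hat
  · have tail_eq_one {τ : Measure ℝ} [IsProbabilityMeasure τ] (hτ : ∀ᵐ x ∂τ, x ∈ Set.Icc a b) :
        τ (Set.Ioi t) = 1 :=
      (prob_compl_eq_zero_iff measurableSet_Ioi).1 <|
        measure_eq_zero_iff_ae_notMem.2 <| hτ.mono fun x hx => not_not.2 (hta.trans_le hx.1)
    rw [tail_eq_one hρ, tail_eq_one hσ]
  rcases lt_or_ge t b with htb | hbt
  · exact h t hat htb
  · have tail_eq_zero {τ : Measure ℝ} (hτ : ∀ᵐ x ∂τ, x ∈ Set.Icc a b) : τ (Set.Ioi t) = 0 :=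
      measure_eq_zero_iff_ae_notMem.2 <| hτ.mono fun x hx => not_lt.2 (hx.2.trans hbt)
    rw [tail_eq_zero hρ, tail_eq_zero hσ]

theorem map_norm_sq_apply_haar {n : ℕ} (hn : n ≠ 0) (μ : Measure (unitaryGroup (Fin (n + 1)) ℂ))
    [μ.IsMulRightInvariant] [IsProbabilityMeasure μ] (i j : Fin (n + 1)) :
    μ.map (fun U => ‖U i j‖ ^ 2) = betaMeasure 1 n := by
  have hm : Measurable fun U : unitaryGroup (Fin (n + 1)) ℂ => ‖U i j‖ ^ 2 :=
    ((continuous_unitaryGroup_apply i j).norm.pow 2).measurable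
  have n_pos : (0 : ℝ) < n := by positivity
  have := isProbabilityMeasure_betaMeasure one_pos n_pos
  have := Measure.isProbabilityMeasure_map (μ := μ) hm.aemeasurable
  refine ext_of_Ioi_of_ae_mem_Icc (a := 0) (b := 1) ?_
    ((ae_mem_Ioo_betaMeasure 1 n).mono fun _ hx => Set.Ioo_subset_Icc_self hx) fun t ht₀ ht₁ => ?_
  · exact (ae_map_iff hm.aemeasurable measurableSet_Icc).2 <| ae_of_all _ fun U =>
      ⟨by positivity, pow_le_one₀ (norm_nonneg _) (entry_norm_bound_of_unitary U.2 i j)⟩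
  · rw [Measure.map_apply hm measurableSet_Ioi, betaMeasure_one_Ioi n_pos ht₀ ht₁.le,
      Real.rpow_natCast]
    exact haar_setOf_lt_norm_sq_apply μ i j ht₀ ht₁

end Beta

section Phase

instance : IsProbabilityMeasure uniformCircle where
  measure_univ := by
    rw [uniformCircle, Measure.smul_apply, Measure.restrict_apply_univ, Real.volume_Ico, sub_zero,
      smul_eq_mul]
    exact ENNReal.inv_mul_cancel (by positivity) ENNReal.ofReal_ne_top

theorem lintegral_comp_add_right_uniformCircle {f : ℝ → ENNReal}
    (hf : Function.Periodic f (2 * Real.pi)) (φ : ℝ) :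
    ∫⁻ ω, f (ω + φ) ∂uniformCircle = ∫⁻ ω, f ω ∂uniformCircle := by
  have translate : ∫⁻ ω in Set.Ioc 0 (0 + 2 * Real.pi), f (ω + φ) =
      ∫⁻ ω in Set.Ioc φ (φ + 2 * Real.pi), f ω := by
    rw [(measurePreserving_add_right volume φ).setLIntegral_comp_emb
      (measurableEmbedding_addRight φ), Set.image_add_const_Ioc, zero_add, zero_add, add_comm φ]
  have change_period := (isAddFundamentalDomain_Ioc Real.two_pi_pos φ volume).setLIntegral_eq
    (isAddFundamentalDomain_Ioc Real.two_pi_pos 0 volume) f hf.map_vadd_zmultiples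
  rw [uniformCircle, lintegral_smul_measure, lintegral_smul_measure, restrict_Ico_eq_restrict_Ioc,
    ← zero_add (2 * Real.pi), translate, change_period]

theorem lintegral_exp_mul_uniformCircle (f : ℂ → ENNReal) (z : ℂ) :
    ∫⁻ ω : ℝ, f (Complex.exp (Complex.I * ω) * z) ∂uniformCircle =
      ∫⁻ ω : ℝ, f (Complex.exp (Complex.I * ω) * ‖z‖) ∂uniformCircle := by
  have periodic : Function.Periodic (fun ω : ℝ => f (Complex.exp (Complex.I * ω) * ‖z‖))
      (2 * Real.pi) := fun ω => by
    simp [mul_add, Complex.exp_add, mul_comm Complex.I (2 * Real.pi : ℂ)]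
  rw [← lintegral_comp_add_right_uniformCircle periodic z.arg]
  refine lintegral_congr fun ω => ?_
  nth_rw 1 [← Complex.norm_mul_exp_arg_mul_I z]
  rw [Complex.ofReal_add, mul_add, Complex.exp_add, mul_comm Complex.I (z.arg : ℂ), mul_assoc,
    mul_comm (‖z‖ : ℂ)]

theorem eq_map_uniformCircle_prod_of_forall_map_exp_mul_eq {ρ : Measure ℂ} [SFinite ρ]
    (hρ : ∀ ω : ℝ, ρ.map (Complex.exp (Complex.I * ω) * ·) = ρ) :
    ρ = (uniformCircle.prod (ρ.map (‖·‖ ^ 2))).map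
      fun p => Complex.exp (Complex.I * p.1) * √p.2 := by
  refine Measure.ext_of_lintegral _ fun f hf => ?_
  have norm_sq_measurable : Measurable ((‖·‖ ^ 2) : ℂ → ℝ) := by fun_prop
  calc ∫⁻ z, f z ∂ρ
      = ∫⁻ ω : ℝ, ∫⁻ z, f (Complex.exp (Complex.I * ω) * z) ∂ρ ∂uniformCircle := by
        have invariant (ω : ℝ) : ∫⁻ z, f (Complex.exp (Complex.I * ω) * z) ∂ρ = ∫⁻ z, f z ∂ρ := by
          rw [← lintegral_map hf (measurable_const_mul _), hρ]
        simp [invariant]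
    _ = ∫⁻ z, ∫⁻ ω : ℝ, f (Complex.exp (Complex.I * ω) * ‖z‖) ∂uniformCircle ∂ρ := by
        rw [lintegral_lintegral_swap (by fun_prop)]
        exact lintegral_congr fun z => lintegral_exp_mul_uniformCircle f z
    _ = ∫⁻ b, ∫⁻ ω : ℝ, f (Complex.exp (Complex.I * ω) * √b) ∂uniformCircle ∂ρ.map (‖·‖ ^ 2) := by
        rw [lintegral_map (by fun_prop) norm_sq_measurable]
        simp only [Real.sqrt_sq (norm_nonneg _)]
    _ = ∫⁻ z, f z ∂(uniformCircle.prod (ρ.map (‖·‖ ^ 2))).map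
          fun p => Complex.exp (Complex.I * p.1) * √p.2 := by
        rw [lintegral_map hf (by fun_prop), lintegral_prod_symm _ (by fun_prop)]

theorem map_mul_apply_haar {N : ℕ} (μ : Measure (unitaryGroup (Fin N) ℂ))
    [μ.IsMulRightInvariant] (i j : Fin N) {u : ℂ} (hu : ‖u‖ = 1) :
    (μ.map fun U => U i j).map (u * ·) = μ.map fun U => U i j := by
  have hm : Measurable fun U : unitaryGroup (Fin N) ℂ => U i j :=
    (continuous_unitaryGroup_apply i j).measurable
  have star_mul_self : star u * u = 1 := by simp [Complex.conj_mul', hu]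
  let uI : unitaryGroup (Fin N) ℂ :=
    ⟨u • 1, Unitary.smul_mem_of_mem (Unitary.mem_iff_star_mul_self.2 star_mul_self) (one_mem _)⟩
  have entry_mul_uI (U : unitaryGroup (Fin N) ℂ) : (U * uI) i j = u * U i j := by
    simp [uI]
  rw [Measure.map_map (measurable_const_mul u) hm]
  nth_rw 2 [← map_mul_right_eq_self μ uI]
  rw [Measure.map_map hm (measurable_mul_const uI)]
  exact congrArg μ.map (funext fun U => (entry_mul_uI U).symm)

theorem map_apply_haar {n : ℕ} (hn : n ≠ 0) (μ : Measure (unitaryGroup (Fin (n + 1)) ℂ))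
    [μ.IsMulRightInvariant] [IsProbabilityMeasure μ] (i j : Fin (n + 1)) :
    μ.map (fun U => U i j) = (uniformCircle.prod (betaMeasure 1 n)).map
      fun p => Complex.exp (Complex.I * p.1) * √p.2 := by
  have hm : Measurable fun U : unitaryGroup (Fin (n + 1)) ℂ => U i j :=
    (continuous_unitaryGroup_apply i j).measurable
  have norm_sq_measurable : Measurable ((‖·‖ ^ 2) : ℂ → ℝ) := by fun_prop
  rw [← map_norm_sq_apply_haar hn μ i j]
  have := eq_map_uniformCircle_prod_of_forall_map_exp_mul_eq fun ω => map_mul_apply_haar μ i j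
    (Complex.norm_exp_I_mul_ofReal ω)
  rwa [Measure.map_map norm_sq_measurable hm] at this

end Phase

section Product

open scoped Measure in
theorem map_prod_pi_succ_s19 {n : ℕ} {X E : Type*} [MeasurableSpace X] (ρ : Fin (n + 1) → Measure X)
    [∀ l, SigmaFinite (ρ l)] [CommMonoid E] [MeasurableSpace E] [MeasurableMul₂ E] {g : X → E}
    (hg : Measurable g) : (Measure.pi ρ).map (fun x => ∏ l, g (x l)) =
      (ρ 0).map g ∗ₘ (Measure.pi fun l : Fin n => ρ l.succ).map (fun x => ∏ l, g (x l)) := by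
  have tail_measurable : Measurable fun x : Fin n → X => ∏ l, g (x l) := by fun_prop
  have split_measurable := hg.prodMap tail_measurable
  have split := (measurePreserving_piFinSuccAbove ρ 0).map_eq
  simp only [Fin.succAbove_zero] at split
  rw [Measure.mconv, Measure.map_prod_map _ _ hg tail_measurable,
    Measure.map_map measurable_mul split_measurable, ← split,
    Measure.map_map (measurable_mul.comp split_measurable) (MeasurableEquiv.measurable _)]
  exact congrArg (Measure.pi ρ).map (funext fun x => Fin.prod_univ_succ _)

theorem map_prod_pi_prod_pi {ι X Y E : Type*} [Fintype ι] [MeasurableSpace X] [MeasurableSpace Y]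
    (α : ι → Measure X) (β : ι → Measure Y) [∀ l, SigmaFinite (α l)] [∀ l, SigmaFinite (β l)]
    [CommMonoid E] [MeasurableSpace E] [MeasurableMul₂ E] {g : X × Y → E} (hg : Measurable g) :
    ((Measure.pi α).prod (Measure.pi β)).map (fun p => ∏ l, g (p.1 l, p.2 l)) =
      (Measure.pi fun l => (α l).prod (β l)).map (fun x => ∏ l, g (x l)) := by
  rw [← (measurePreserving_arrowProdEquivProdArrow X Y ι α β).map_eq,
    Measure.map_map (by fun_prop)
      (MeasurableEquiv.measurable _)]
  rfl

theorem map_det_one_sub_trunc {M N : ℕ} (h : M < N) (μ : Measure (unitaryGroup (Fin N) ℂ))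
    [μ.IsHaarMeasure] [IsProbabilityMeasure μ] :
    μ.map (fun U => (1 - trunc N M h.le U).det) =
      (Measure.pi fun l : Fin M => uniformCircle.prod (betaMeasure 1 (N - (l + 1)))).map
        fun x => ∏ l, (1 - Complex.exp (Complex.I * (x l).1) * √(x l).2) := by
  induction M generalizing N with
  | zero => simp
  | succ M ih =>
    obtain ⟨n, rfl⟩ : ∃ n, N = n + 1 := ⟨N - 1, by lia⟩
    have hM : M < n := Nat.lt_of_succ_lt_succ h
    obtain ⟨ν, _, _⟩ := exists_isHaarMeasure_isProbabilityMeasure (unitaryGroup (Fin n) ℂ)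
    have corner : μ.map (fun U => 1 - U 0 0) = (uniformCircle.prod (betaMeasure 1 n)).map
        fun p => 1 - Complex.exp (Complex.I * p.1) * √p.2 := by
      have := congrArg (Measure.map (1 - ·)) (map_apply_haar (by lia) μ 0 0)
      rwa [Measure.map_map (by fun_prop) (continuous_unitaryGroup_apply 0 0).measurable,
        Measure.map_map (by fun_prop) (by fun_prop)] at this
    rw [map_det_one_sub_trunc_succ hM.le μ ν, corner, ih hM ν,
      map_prod_pi_succ_s19 (fun l : Fin (M + 1) =>
          uniformCircle.prod (betaMeasure 1 ((n + 1 : ℕ) - (l + 1))))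
        (g := fun x => 1 - Complex.exp (Complex.I * x.1) * √x.2) (by fun_prop)]
    simp

end Product

theorem law_det_one_sub_truncated_unitary
    (M N : ℕ) (hM : 1 ≤ M) (hMN : M < N)
    (μ : Measure (Matrix.unitaryGroup (Fin N) ℂ))
    [μ.IsHaarMeasure] [IsProbabilityMeasure μ] :
    Measure.map (fun U =>
        Matrix.det ((1 : Matrix (Fin M) (Fin M) ℂ) - trunc N M hMN.le U)) μ
    = Measure.map (fun p : (Fin M → ℝ) × (Fin M → ℝ) =>
        ∏ l : Fin M, ((1 : ℂ) - Complex.exp (Complex.I * p.1 l) * (Real.sqrt (p.2 l) : ℂ)))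
        ((Measure.pi fun _ : Fin M => uniformCircle).prod
          (Measure.pi fun l : Fin M => betaMeasure 1 ((N : ℝ) - ((l : ℕ) + 1)))) := by
  rw [map_det_one_sub_trunc hMN μ]
  exact (map_prod_pi_prod_pi (fun _ => uniformCircle)
    (fun l : Fin M => betaMeasure 1 (N - (l + 1)))
    (g := fun x => 1 - Complex.exp (Complex.I * x.1) * √x.2) (by fun_prop)).symm
end
end
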